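/- arXiv:math/9902044 — 2 statements merged into one kernel-verified Lean document; each statement's English description precedes it below -/
import Mathlib

section
/- Let N ≥ 1 be an integer and γ > 0 a real number. Then ∫_{ℝ^N} ∏_{1≤i<j≤N} |λ_j − λ_i|^{2γ} · exp(−(γ/2)·(λ_1² + ⋯ + λ_N²)) dλ = ( √(2π) · γ^{−((N−1)γ+1)/2} )^N · ∏_{j=0}^{N−1} Γ(1+(1+j)γ)/Γ(1+γ). -/
open MeasureTheory


/-- Absolute Vandermonde. -/
noncomputable def vd {n : ℕ} (x : Fin n → ℝ) : ℝ :=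
  ∏ i : Fin n, ∏ j ∈ Finset.Ioi i, |x j - x i|

/-- Product of all cross differences. -/
noncomputable def cross {n m : ℕ} (l : Fin n → ℝ) (u : Fin m → ℝ) : ℝ :=
  ∏ i, ∏ j, |l i - u j|

/-- Bordered Cauchy matrix. -/
noncomputable def bord {n : ℕ} (l : Fin n → ℝ) (u : Fin (n + 1) → ℝ) :
    Matrix (Fin (n + 1)) (Fin (n + 1)) ℝ :=
  Matrix.of fun j k => (Fin.cons 1 (fun i => 1 / (l i - u j)) : Fin (n + 1) → ℝ) k

lemma vd_succ {n : ℕ} (x : Fin (n + 1) → ℝ) :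
    vd x = (∏ i : Fin n, |x i.succ - x 0|) * vd (fun i => x i.succ) := by
  simp [vd, Fin.prod_univ_succ, Fin.prod_Ioi_succ]

lemma cross_succ {n m : ℕ} (l : Fin (n + 1) → ℝ) (u : Fin (m + 1) → ℝ) :
    cross l u = |l 0 - u 0| * (∏ j : Fin m, |l 0 - u j.succ|) * (∏ i : Fin n, |l i.succ - u 0|) *
      cross (fun i => l i.succ) (fun j => u j.succ) := by
  simp only [cross, Fin.prod_univ_succ, Finset.prod_mul_distrib]
  ring

lemma bord_step1 {n : ℕ} (l : Fin n → ℝ) (u : Fin (n + 1) → ℝ) (h : ∀ i j, l i ≠ u j) :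
    (bord l u).det = (∏ j : Fin n, (u j.succ - u 0)) * (∏ i, 1 / (l i - u 0)) *
      (Matrix.of fun (j i : Fin n) => 1 / (l i - u j.succ)).det := by
  let A : Matrix (Fin (n + 1)) (Fin (n + 1)) ℝ := Matrix.of fun j k =>
    bord l u j k + (Fin.cons 0 (fun _ => -1) : Fin (n + 1) → ℝ) j * bord l u 0 k
  have hA : A.det = (bord l u).det :=
    Matrix.det_eq_of_forall_row_eq_smul_add_const (Fin.cons 0 (fun _ => -1)) 0 (by simp)
      (fun i j => rfl)
  rw [← hA, Matrix.det_succ_column_zero, Fin.sum_univ_succ]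
  have h0 : ∀ i : Fin n, A i.succ 0 = 0 := by intro i; simp [A, bord]
  simp only [h0, mul_zero, zero_mul, Finset.sum_const_zero, add_zero]
  have h1 : A 0 0 = 1 := by simp [A, bord]
  rw [h1, mul_assoc (∏ j : Fin n, (u j.succ - u 0)), ← Matrix.det_mul_row, ← Matrix.det_mul_column]
  simp only [Fin.val_zero, pow_zero, one_mul]
  congr 1
  ext j i
  have e1 := sub_ne_zero.2 (h i 0)
  have e2 := sub_ne_zero.2 (h i j.succ)
  simp [A, bord]
  field_simp
  ring

lemma cauchy_step {n : ℕ} (l : Fin (n + 1) → ℝ) (u : Fin (n + 1) → ℝ) (h : ∀ i j, l i ≠ u j) :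
    (∏ j, (l 0 - u j)) * (Matrix.of fun (j i : Fin (n + 1)) => 1 / (l i - u j)).det =
      (∏ i : Fin n, (l 0 - l i.succ)) * (bord (fun i => l i.succ) u).det := by
  have hb : (∏ i : Fin n, (l 0 - l i.succ)) =
      ∏ k : Fin (n + 1), (Fin.cons 1 (fun i => l 0 - l i.succ) : Fin (n + 1) → ℝ) k := by
    simp [Fin.prod_univ_succ]
  rw [hb, ← Matrix.det_mul_row (Fin.cons 1 (fun i => l 0 - l i.succ)),
    ← Matrix.det_mul_column (fun j => l 0 - u j)]
  rw [← Matrix.det_transpose, ← Matrix.det_transpose (Matrix.of _)]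
  refine Matrix.det_eq_of_forall_row_eq_smul_add_const (Fin.cons 0 (fun _ => 1)) 0 (by simp) ?_
  intro i j
  have e1 := sub_ne_zero.2 (h 0 j)
  refine Fin.cases ?_ (fun i => ?_) i
  · simp [bord]
    field_simp
  · have e2 := sub_ne_zero.2 (h i.succ j)
    simp [bord]
    field_simp
    ring

lemma abs_det_bord {n : ℕ} (l : Fin n → ℝ) (u : Fin (n + 1) → ℝ) (h : ∀ i j, l i ≠ u j) :
    |(bord l u).det| * cross l u = vd l * vd u := by
  induction n with
  | zero => simp [bord, cross, vd]
  | succ n ih =>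
    have ih' := ih (fun i => l i.succ) (fun j => u j.succ) (fun i j => h _ _)
    have s1 := bord_step1 l u h
    have s2 := cauchy_step l (fun j => u j.succ) (fun i j => h _ _)
    have p1 : (∏ i, 1 / (l i - u 0)) * ∏ i, (l i - u 0) = 1 := by
      rw [← Finset.prod_mul_distrib]
      apply Finset.prod_eq_one
      intro i _
      have e1 := sub_ne_zero.2 (h i 0)
      field_simp
    have s3 : (bord l u).det * (∏ i, (l i - u 0)) * (∏ j : Fin (n + 1), (l 0 - u j.succ)) =
       (∏ j : Fin (n + 1), (u j.succ - u 0)) * (∏ i : Fin n, (l 0 - l i.succ)) *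
        (bord (fun i => l i.succ) (fun j => u j.succ)).det := by
      rw [s1]
      linear_combination (∏ j : Fin (n + 1), (u j.succ - u 0)) * s2 +
        (∏ j : Fin (n + 1), (u j.succ - u 0)) * ((∏ j : Fin (n + 1), (l 0 - u j.succ)) * (Matrix.of fun (j i : Fin (n + 1)) => 1 / (l i - u j.succ)).det) * p1
    have s4 := congrArg abs s3
    simp only [abs_mul, Finset.abs_prod] at s4
    rw [Fin.prod_univ_succ (fun i => |l i - u 0|)] at s4
    rw [vd_succ l, vd_succ u, cross_succ]
    have : ∀ i : Fin n, |l i.succ - l 0| = |l 0 - l i.succ| := fun i => abs_sub_comm _ _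
    simp only [this]
    linear_combination cross (fun i => l i.succ) (fun j => u j.succ) * s4 + (∏ j : Fin (n + 1), |u j.succ - u 0|) * (∏ i : Fin n, |l 0 - l i.succ|) * ih'

/-- Signed product of differences. -/
noncomputable def dd {n : ℕ} (x : Fin n → ℝ) (i : Fin n) : ℝ := ∏ k ∈ ({i}ᶜ : Finset (Fin n)), (x i - x k)

lemma prod_abs_dd {n : ℕ} (x : Fin n → ℝ) : ∏ i, |dd x i| = vd x ^ 2 := by
  have := Finset.prod_prod_Ioi_mul_eq_prod_prod_off_diag (fun i j => |x j - x i|)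
  simp only [dd, Finset.abs_prod]
  rw [← this, vd, sq, ← Finset.prod_mul_distrib]
  refine Finset.prod_congr rfl fun i _ => ?_
  rw [← Finset.prod_mul_distrib]
  exact Finset.prod_congr rfl fun j _ => by rw [abs_sub_comm (x i)]

lemma dd_ne {n : ℕ} {x : Fin n → ℝ} (hx : StrictMono x) (i : Fin n) : dd x i ≠ 0 := by
  refine Finset.prod_ne_zero_iff.2 fun k hk => sub_ne_zero.2 fun h => ?_
  have := hx.injective h
  simp [this] at hk

lemma vd_pos {n : ℕ} {x : Fin n → ℝ} (hx : StrictMono x) : 0 < vd x := by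
  refine Finset.prod_pos fun i _ => Finset.prod_pos fun j hj => abs_pos.2 (sub_ne_zero.2 ?_)
  exact (hx (Finset.mem_Ioi.1 hj)).ne'

/-- Interlacing. -/
def Lace {n : ℕ} (l : Fin n → ℝ) (u : Fin (n + 1) → ℝ) : Prop :=
  ∀ i : Fin n, u i.castSucc < l i ∧ l i < u i.succ

lemma Lace.smu {n : ℕ} {l : Fin n → ℝ} {u : Fin (n + 1) → ℝ} (h : Lace l u) : StrictMono u :=
  Fin.strictMono_iff_lt_succ.2 fun i => (h i).1.trans (h i).2

lemma Lace.sml {n : ℕ} {l : Fin n → ℝ} {u : Fin (n + 1) → ℝ} (h : Lace l u) : StrictMono l := by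
  intro i j hij
  refine (h i).2.trans_le ((h.smu.monotone ?_).trans (h j).1.le)
  simp [Fin.le_def]; exact hij

lemma Lace.lt1 {n : ℕ} {l : Fin n → ℝ} {u : Fin (n + 1) → ℝ} (h : Lace l u) {i : Fin n}
    {j : Fin (n + 1)} (hij : j ≤ i.castSucc) : u j < l i :=
  (h.smu.monotone hij).trans_lt (h i).1

lemma Lace.lt2 {n : ℕ} {l : Fin n → ℝ} {u : Fin (n + 1) → ℝ} (h : Lace l u) {i : Fin n}
    {j : Fin (n + 1)} (hij : i.castSucc < j) : l i < u j :=
  (h i).2.trans_le (h.smu.monotone (by simpa [Fin.le_def, Fin.lt_def, Nat.succ_le_iff] using hij))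

lemma Lace.ne {n : ℕ} {l : Fin n → ℝ} {u : Fin (n + 1) → ℝ} (h : Lace l u) (i : Fin n)
    (j : Fin (n + 1)) : l i ≠ u j := by
  rcases le_or_gt j i.castSucc with hh | hh
  · exact (h.lt1 hh).ne'
  · exact (h.lt2 hh).ne

lemma cross_pos {n : ℕ} {l : Fin n → ℝ} {u : Fin (n + 1) → ℝ} (h : Lace l u) : 0 < cross l u :=
  Finset.prod_pos fun i _ => Finset.prod_pos fun j _ => abs_pos.2 (sub_ne_zero.2 (h.ne i j))

/-- Residues in the second map. -/
noncomputable def ww {n : ℕ} (l : Fin n → ℝ) (u : Fin (n + 1) → ℝ) (j : Fin (n + 1)) : ℝ :=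
  (∏ i, (u j - l i)) / dd u j

/-- Residues in the first map. -/
noncomputable def qq {n : ℕ} (l : Fin n → ℝ) (u : Fin (n + 1) → ℝ) (i : Fin n) : ℝ :=
  -(∏ j, (l i - u j)) / dd l i

lemma ww_pos {n : ℕ} {l : Fin n → ℝ} {u : Fin (n + 1) → ℝ} (h : Lace l u) (j : Fin (n + 1)) :
    0 < ww l u j := by
  have : dd u j = ∏ i, (u j - u (j.succAbove i)) := by
    rw [dd, ← Fin.image_succAbove_univ, Finset.prod_image]
    intro a _ b _ hab
    exact Fin.succAbove_right_injective hab
  rw [ww, this, ← Finset.prod_div_distrib]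
  refine Finset.prod_pos fun i _ => ?_
  rcases le_or_gt j i.castSucc with hh | hh
  · rw [Fin.succAbove_of_le_castSucc _ _ hh]
    refine div_pos_of_neg_of_neg (sub_neg.2 (h.lt1 hh)) (sub_neg.2 (h.smu ?_))
    exact lt_of_le_of_lt hh (Fin.castSucc_lt_succ)
  · rw [Fin.succAbove_of_castSucc_lt _ _ hh]
    exact div_pos (sub_pos.2 (h.lt2 hh)) (sub_pos.2 (h.smu hh))

lemma qq_pos {n : ℕ} {l : Fin n → ℝ} {u : Fin (n + 1) → ℝ} (h : Lace l u) (i : Fin n) :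
    0 < qq l u i := by
  have e : qq l u i = (l i - u 0) * (u i.succ - l i) *
      ∏ k ∈ ({i}ᶜ : Finset (Fin n)), ((l i - u k.succ) / (l i - l k)) := by
    rw [qq, Fin.prod_univ_succ, Finset.prod_div_distrib, ← dd,
      ← Finset.mul_prod_erase Finset.univ _ (Finset.mem_univ i), ← Finset.compl_singleton]
    ring
  rw [e]
  refine mul_pos (mul_pos (sub_pos.2 (h.lt1 (by simp))) (sub_pos.2 (h i).2))
    (Finset.prod_pos fun k hk => ?_)
  have hk' : k ≠ i := by simpa using hk
  rcases lt_or_gt_of_ne hk' with hh | hh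
  · exact div_pos (sub_pos.2 (h.lt1 (by simpa [Fin.le_def, Nat.succ_le_iff] using hh))) (sub_pos.2 (h.sml hh))
  · refine div_pos_of_neg_of_neg (sub_neg.2 (h.lt2 ?_)) (sub_neg.2 (h.sml hh))
    simp only [Fin.lt_def, Fin.val_castSucc, Fin.val_succ] at *; omega

lemma prod_ww {n : ℕ} {l : Fin n → ℝ} {u : Fin (n + 1) → ℝ} (h : Lace l u) :
    ∏ j, ww l u j = cross l u / vd u ^ 2 := by
  have : ∏ j, ww l u j = ∏ j, |ww l u j| :=
    Finset.prod_congr rfl fun j _ => (abs_of_pos (ww_pos h j)).symm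
  rw [this, ← prod_abs_dd, cross, Finset.prod_comm, ← Finset.prod_div_distrib]
  refine Finset.prod_congr rfl fun j _ => ?_
  rw [ww, abs_div, Finset.abs_prod]
  simp only [abs_sub_comm]

lemma prod_qq {n : ℕ} {l : Fin n → ℝ} {u : Fin (n + 1) → ℝ} (h : Lace l u) :
    ∏ i, qq l u i = cross l u / vd l ^ 2 := by
  have : ∏ j, qq l u j = ∏ j, |qq l u j| :=
    Finset.prod_congr rfl fun j _ => (abs_of_pos (qq_pos h j)).symm
  rw [this, ← prod_abs_dd, cross, ← Finset.prod_div_distrib]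
  refine Finset.prod_congr rfl fun j _ => ?_
  rw [qq, abs_div, abs_neg, Finset.abs_prod]
open Polynomial in
/-- Lagrange type combination. -/
noncomputable def lag {n : ℕ} (u w : Fin n → ℝ) : ℝ[X] :=
  ∑ j, C (w j) * ∏ k ∈ ({j}ᶜ : Finset (Fin n)), (X - C (u k))

open Polynomial in
/-- Monic polynomial with given roots. -/
noncomputable def mon {n : ℕ} (u : Fin n → ℝ) : ℝ[X] := ∏ k, (X - C (u k))

open Polynomial in
lemma eval_lag {n : ℕ} (u w : Fin n → ℝ) (j : Fin n) : (lag u w).eval (u j) = w j * dd u j := by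
  simp only [lag, eval_finsetSum, eval_mul, eval_C, eval_prod, eval_sub, eval_X]
  rw [Finset.sum_eq_single j]
  · rfl
  · intro b _ hb
    rw [mul_eq_zero]; right
    exact Finset.prod_eq_zero (i := j) (by simpa using hb.symm) (sub_self _)
  · simp

open Polynomial in
lemma eval_mon {n : ℕ} (u : Fin n → ℝ) (x : ℝ) : (mon u).eval x = ∏ k, (x - u k) := by
  simp [mon, eval_prod]

open Polynomial in
lemma coeff_mon {n : ℕ} (u : Fin n → ℝ) : (mon u).coeff n = 1 := by
  have h1 : (mon u).Monic := monic_prod_X_sub_C u Finset.univ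
  have h2 : (mon u).natDegree = n := by
    rw [mon, natDegree_finsetProd_X_sub_C_eq_card, Finset.card_univ, Fintype.card_fin]
  have := h1.coeff_natDegree
  rwa [h2] at this

open Polynomial in
lemma coeff_mon_gt {n m : ℕ} (u : Fin n → ℝ) (h : n < m) : (mon u).coeff m = 0 := by
  have h2 : (mon u).natDegree = n := by
    rw [mon, natDegree_finsetProd_X_sub_C_eq_card, Finset.card_univ, Fintype.card_fin]
  exact coeff_eq_zero_of_natDegree_lt (by omega)

open Polynomial in
lemma coeff_lag {n : ℕ} (u w : Fin (n + 1) → ℝ) : (lag u w).coeff n = ∑ j, w j := by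
  simp only [lag, finsetSum_coeff, coeff_C_mul]
  refine Finset.sum_congr rfl fun j _ => ?_
  have h1 : (∏ k ∈ ({j}ᶜ : Finset (Fin (n + 1))), (X - C (u k))).Monic := monic_prod_X_sub_C u _
  have h2 : (∏ k ∈ ({j}ᶜ : Finset (Fin (n + 1))), (X - C (u k))).natDegree = n := by
    rw [natDegree_finsetProd_X_sub_C_eq_card]
    simp [Finset.card_compl]
  have := h1.coeff_natDegree
  rw [h2] at this
  rw [this, mul_one]

open Polynomial in
lemma coeff_lag_ge {n m : ℕ} (u w : Fin n → ℝ) (h : n ≤ m) : (lag u w).coeff m = 0 := by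
  simp only [lag, finsetSum_coeff, coeff_C_mul]
  refine Finset.sum_eq_zero fun j _ => ?_
  have h2 : (∏ k ∈ ({j}ᶜ : Finset (Fin n)), (X - C (u k))).natDegree = n - 1 := by
    rw [natDegree_finsetProd_X_sub_C_eq_card]
    simp [Finset.card_compl]
  rw [coeff_eq_zero_of_natDegree_lt, mul_zero]
  have := j.pos
  omega

open Polynomial in
lemma poly_zero {n : ℕ} {u : Fin n → ℝ} (hu : Function.Injective u) {f : ℝ[X]}
    (h1 : ∀ m, n ≤ m → f.coeff m = 0) (h2 : ∀ i, f.eval (u i) = 0) : f = 0 := by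
  refine eq_zero_of_degree_lt_of_eval_index_eq_zero (v := u) Finset.univ hu.injOn ?_
    fun i _ => h2 i
  rw [Finset.card_univ, Fintype.card_fin, degree_lt_iff_coeff_zero]
  exact fun m hm => h1 m hm

lemma mon_eq_lag {n : ℕ} (l : Fin n → ℝ) {u : Fin (n + 1) → ℝ} (hu : StrictMono u) :
    mon l = lag u (ww l u) := by
  rw [← sub_eq_zero]
  refine poly_zero hu.injective (fun m hm => ?_) (fun i => ?_)
  · rw [Polynomial.coeff_sub, coeff_lag_ge _ _ hm, coeff_mon_gt _ (by omega), sub_zero]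
  · rw [Polynomial.eval_sub, eval_lag, eval_mon, ww, div_mul_cancel₀ _ (dd_ne hu i), sub_self]

lemma sum_ww {n : ℕ} (l : Fin n → ℝ) {u : Fin (n + 1) → ℝ} (hu : StrictMono u) :
    ∑ j, ww l u j = 1 := by
  rw [← coeff_lag u, ← mon_eq_lag l hu, coeff_mon]

lemma ww_inj {n : ℕ} {l l' : Fin n → ℝ} {u : Fin (n + 1) → ℝ} {t t' : ℝ} (ht : 0 < t)
    (h : Lace l u) (h' : Lace l' u)
    (he : ∀ j, t * ww l u j = t' * ww l' u j) : t = t' ∧ l = l' := by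
  have e1 : t = t' := by
    have := Finset.sum_congr (s₁ := Finset.univ) rfl fun j _ => he j
    rwa [← Finset.mul_sum, ← Finset.mul_sum, sum_ww l h.smu, sum_ww l' h.smu, mul_one,
      mul_one] at this
  subst e1
  refine ⟨rfl, ?_⟩
  have e2 : ww l u = ww l' u := funext fun j => mul_left_cancel₀ ht.ne' (he j)
  have e3 : mon l = mon l' := by rw [mon_eq_lag l h.smu, mon_eq_lag l' h.smu, e2]
  funext i
  have e4 : ∏ k, (l i - l' k) = 0 := by
    rw [← eval_mon, ← e3, eval_mon]
    exact Finset.prod_eq_zero (Finset.mem_univ i) (sub_self _)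
  obtain ⟨k, _, hk⟩ := Finset.prod_eq_zero_iff.1 e4
  have hk := sub_eq_zero.1 hk
  rcases lt_trichotomy i k with hh | hh | hh
  · have a1 := (h i).2
    have a2 : u i.succ < l' k := h'.lt1 (by simpa [Fin.le_def, Nat.succ_le_iff] using hh)
    linarith
  · rw [hk, hh]
  · have a1 := (h' k).2
    have a2 : u k.succ < l i := h.lt1 (by simpa [Fin.le_def, Nat.succ_le_iff] using hh)
    linarith

lemma dd_mul_neg {n : ℕ} {u : Fin (n + 1) → ℝ} (hu : StrictMono u) (i : Fin n) :
    dd u i.castSucc * dd u i.succ < 0 := by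
  have hne : i.castSucc ≠ i.succ := (Fin.castSucc_lt_succ).ne
  have hlt : u i.castSucc < u i.succ := hu Fin.castSucc_lt_succ
  rw [dd, dd, ← Finset.mul_prod_erase ({i.castSucc}ᶜ) _ (a := i.succ) (by simpa using hne.symm),
    ← Finset.mul_prod_erase ({i.succ}ᶜ) _ (a := i.castSucc) (by simpa using hne)]
  have hs : ({i.succ}ᶜ : Finset (Fin (n + 1))).erase i.castSucc =
    ({i.castSucc}ᶜ : Finset (Fin (n + 1))).erase i.succ := by
    ext k; simp [and_comm]
  rw [hs]
  have hp : 0 < (∏ k ∈ ({i.castSucc}ᶜ : Finset (Fin (n + 1))).erase i.succ, (u i.castSucc - u k)) *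
      (∏ k ∈ ({i.castSucc}ᶜ : Finset (Fin (n + 1))).erase i.succ, (u i.succ - u k)) := by
    rw [← Finset.prod_mul_distrib]
    refine Finset.prod_pos fun k hk => ?_
    simp only [Finset.mem_erase, Finset.mem_compl, Finset.mem_singleton] at hk
    rcases lt_or_gt_of_ne hk.2 with hh | hh
    · exact mul_pos (sub_pos.2 (hu hh)) (sub_pos.2 (hu (hh.trans Fin.castSucc_lt_succ)))
    · have : i.succ < k := by
        refine lt_of_le_of_ne ?_ (Ne.symm hk.1)
        simp only [Fin.lt_def, Fin.val_castSucc, Fin.val_succ, Fin.le_def] at *; omega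
      exact mul_pos_of_neg_of_neg (sub_neg.2 (hu hh)) (sub_neg.2 (hu this))
  have : (u i.castSucc - u i.succ) * (u i.succ - u i.castSucc) < 0 :=
    mul_neg_of_neg_of_pos (by linarith) (by linarith)
  nlinarith [mul_neg_of_neg_of_pos this hp]

lemma ivt_sign {f : ℝ → ℝ} (hf : Continuous f) {a b : ℝ} (hab : a < b) (h : f a * f b < 0) :
    ∃ x, a < x ∧ x < b ∧ f x = 0 := by
  rcases mul_neg_iff.1 h with ⟨h1, h2⟩ | ⟨h1, h2⟩
  · obtain ⟨x, hx, hx0⟩ := intermediate_value_Ioo' hab.le hf.continuousOn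
      (show (0 : ℝ) ∈ Set.Ioo (f b) (f a) from ⟨h2, h1⟩)
    exact ⟨x, hx.1, hx.2, hx0⟩
  · obtain ⟨x, hx, hx0⟩ := intermediate_value_Ioo hab.le hf.continuousOn
      (show (0 : ℝ) ∈ Set.Ioo (f a) (f b) from ⟨h1, h2⟩)
    exact ⟨x, hx.1, hx.2, hx0⟩

open Polynomial in
lemma ww_surj {n : ℕ} {u : Fin (n + 1) → ℝ} (hu : StrictMono u) {w : Fin (n + 1) → ℝ}
    (hw : ∀ j, 0 < w j) : ∃ l, Lace l u ∧ ∀ j, (∑ k, w k) * ww l u j = w j := by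
  have : ∀ i : Fin n, ∃ x, u i.castSucc < x ∧ x < u i.succ ∧ (lag u w).eval x = 0 := by
    intro i
    refine ivt_sign (lag u w).continuous (hu Fin.castSucc_lt_succ) ?_
    rw [eval_lag, eval_lag]
    have := mul_neg_of_pos_of_neg (mul_pos (hw i.castSucc) (hw i.succ)) (dd_mul_neg hu i)
    linarith
  choose l h1 h2 h3 using this
  have hl : Lace l u := fun i => ⟨h1 i, h2 i⟩
  refine ⟨l, hl, fun j => ?_⟩
  have key : C (∑ k, w k) * mon l - lag u w = 0 := by
    refine poly_zero hl.sml.injective (fun m hm => ?_) (fun i => ?_)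
    · rw [coeff_sub, coeff_C_mul]
      rcases hm.eq_or_lt with rfl | hm
      · rw [coeff_mon, coeff_lag, mul_one, sub_self]
      · rw [coeff_mon_gt _ hm, coeff_lag_ge _ _ (by omega), mul_zero, sub_zero]
    · rw [eval_sub, h3, eval_mul, eval_mon, Finset.prod_eq_zero (Finset.mem_univ i) (sub_self _)]
      simp
  have := congrArg (eval (u j)) key
  rw [eval_sub, eval_mul, eval_C, eval_mon, eval_lag, eval_zero, sub_eq_zero] at this
  rw [ww, ← mul_div_assoc, this, mul_div_cancel_right₀ _ (dd_ne hu j)]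

open Polynomial in
lemma coeff_rev {ι : Type*} (s : Finset ι) (u : ι → ℝ) :
    (∏ j ∈ s, (1 - C (u j) * X)).coeff 0 = 1 ∧
    (∏ j ∈ s, (1 - C (u j) * X)).coeff 1 = - ∑ j ∈ s, u j ∧
    2 * (∏ j ∈ s, (1 - C (u j) * X)).coeff 2 = (∑ j ∈ s, u j) ^ 2 - ∑ j ∈ s, u j ^ 2 := by
  classical
  induction s using Finset.induction_on with
  | empty => simp [coeff_one]
  | insert a s ha ih =>
    obtain ⟨i0, i1, i2⟩ := ih
    rw [Finset.prod_insert ha, Finset.sum_insert ha, Finset.sum_insert ha]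
    set G := ∏ j ∈ s, (1 - C (u j) * X)
    have e : (1 - C (u a) * X) * G = G - C (u a) * (X * G) := by ring
    rw [e]
    simp only [coeff_sub, coeff_C_mul, coeff_X_mul_zero,
      show (X * G).coeff 1 = G.coeff 0 from coeff_X_mul G 0,
      show (X * G).coeff 2 = G.coeff 1 from coeff_X_mul G 1]
    refine ⟨by simp [i0], by rw [i1, i0]; ring, ?_⟩
    rw [mul_sub, i2, i1]; ring

open Polynomial in
lemma rev_identity {n : ℕ} {l q : Fin n → ℝ} {u : Fin (n + 1) → ℝ} {a : ℝ}
    (h : mon u = (X - C a) * mon l - lag l q) :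
    (∑ j, u j = a + ∑ i, l i) ∧
      ∑ j, u j ^ 2 = a ^ 2 + ∑ i, l i ^ 2 + 2 * ∑ i, q i := by
  have key : (∏ j, (1 - C (u j) * X)) = (1 - C a * X) * (∏ i, (1 - C (l i) * X)) -
      X * (X * ∑ i, C (q i) * ∏ k ∈ ({i}ᶜ : Finset (Fin n)), (1 - C (l k) * X)) := by
    refine eq_of_infinite_eval_eq _ _ (Set.Infinite.mono (s := {x : ℝ | x ≠ 0}) ?_ ?_)
    · intro x hx
      have hx : x ≠ 0 := hx
      have h' := congrArg (fun p => x ^ (n + 1) * eval x⁻¹ p) h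
      simp only [eval_sub, eval_mul, eval_mon, lag, eval_X, eval_C, eval_finsetSum, eval_prod] at h'
      have p1 : ∀ (s : Finset (Fin n)), ∏ i ∈ s, (1 - l i * x) = x ^ s.card * ∏ i ∈ s, (x⁻¹ - l i) := by
        intro s
        rw [← Finset.prod_const, ← Finset.prod_mul_distrib]
        refine Finset.prod_congr rfl fun i _ => ?_
        field_simp
      have p2 : ∏ i, (1 - u i * x) = x ^ (n + 1) * ∏ i, (x⁻¹ - u i) := by
        have hc : x ^ (n + 1) = ∏ _i : Fin (n + 1), x := by simp
        rw [hc, ← Finset.prod_mul_distrib]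
        refine Finset.prod_congr rfl fun i _ => ?_
        field_simp
      simp only [Set.mem_ofPred_eq, eval_sub, eval_mul, eval_X, eval_C, eval_finsetSum, eval_prod,
        eval_one]
      rw [p2, h', p1 Finset.univ, mul_sub, Finset.mul_sum, Finset.mul_sum, Finset.mul_sum]
      congr 1
      · simp only [Finset.card_univ, Fintype.card_fin]
        have : x ^ (n + 1) * (x⁻¹ - a) = x ^ n * (1 - a * x) := by field_simp; ring
        rw [← mul_assoc, this]; ring
      · refine Finset.sum_congr rfl fun i _ => ?_
        rw [p1]
        have : n + 1 = ({i}ᶜ : Finset (Fin n)).card + 2 := by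
          have := i.pos
          simp [Finset.card_compl]; omega
        rw [this]
        ring
    · have : {x : ℝ | x ≠ 0} = ({0} : Set ℝ)ᶜ := by ext; simp
      rw [this]
      exact (Set.finite_singleton 0).infinite_compl
  set S := ∑ i, C (q i) * ∏ k ∈ ({i}ᶜ : Finset (Fin n)), (1 - C (l k) * X) with hS
  have hS0 : S.coeff 0 = ∑ i, q i := by
    rw [hS, finsetSum_coeff]
    refine Finset.sum_congr rfl fun i _ => ?_
    rw [coeff_C_mul, (coeff_rev _ l).1, mul_one]
  obtain ⟨a0, a1, a2⟩ := coeff_rev Finset.univ u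
  obtain ⟨b0, b1, b2⟩ := coeff_rev Finset.univ l
  set G := ∏ i, (1 - C (l i) * X)
  have e : (1 - C a * X) * G = G - C a * (X * G) := by ring
  rw [e] at key
  have c1 := congrArg (fun p => coeff p 1) key
  have c2 := congrArg (fun p => coeff p 2) key
  simp only [coeff_sub, coeff_C_mul,
      show (X * G).coeff 1 = G.coeff 0 from coeff_X_mul G 0,
      show (X * G).coeff 2 = G.coeff 1 from coeff_X_mul G 1,
      show (X * (X * S)).coeff 1 = (X * S).coeff 0 from coeff_X_mul _ 0,
      show (X * (X * S)).coeff 2 = (X * S).coeff 1 from coeff_X_mul _ 1,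
      show (X * S).coeff 1 = S.coeff 0 from coeff_X_mul _ 0,
      coeff_X_mul_zero, hS0, a1, b1, b0] at c1 c2
  have d1 : ∑ j, u j = a + ∑ i, l i := by linarith
  refine ⟨d1, ?_⟩
  have d2 : 2 * (∏ j, (1 - C (u j) * X)).coeff 2 = 2 * (G.coeff 2 - a * -∑ i, l i - ∑ i, q i) := by
    rw [c2]
  rw [a2, d1] at d2
  nlinarith

open Polynomial in
lemma mon_identity {n : ℕ} {l : Fin n → ℝ} (hl : StrictMono l) (u : Fin (n + 1) → ℝ) :
    mon u = (X - C (∑ j, u j - ∑ i, l i)) * mon l - lag l (qq l u) := by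
  set D := X * mon l - lag l (qq l u) - mon u with hD
  have key : D - C (D.coeff n) * mon l = 0 := by
    refine poly_zero hl.injective (fun m hm => ?_) (fun i => ?_)
    · rw [coeff_sub, coeff_C_mul]
      rcases hm.eq_or_lt with rfl | hm
      · rw [coeff_mon, mul_one, sub_self]
      · rw [coeff_mon_gt _ hm, mul_zero, sub_zero, hD]
        obtain ⟨m, rfl⟩ : ∃ k, m = k + 1 := ⟨m - 1, by omega⟩
        rw [coeff_sub, coeff_sub, coeff_X_mul, coeff_lag_ge _ _ (by omega)]
        rcases (show n ≤ m by omega).eq_or_lt with rfl | hm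
        · rw [coeff_mon, coeff_mon]; ring
        · rw [coeff_mon_gt _ hm, coeff_mon_gt _ (by omega)]; ring
    · rw [hD, eval_sub, eval_sub, eval_sub, eval_mul, eval_mul, eval_lag, eval_mon, eval_mon,
        Finset.prod_eq_zero (Finset.mem_univ i) (sub_self _), qq, div_mul_cancel₀ _ (dd_ne hl i)]
      ring
  have k2 : mon u = (X - C (D.coeff n)) * mon l - lag l (qq l u) := by
    have := key
    rw [hD] at this ⊢
    linear_combination -this
  have := (rev_identity k2).1
  rw [this, add_sub_cancel_right]
  exact k2

lemma sum_sq {n : ℕ} {l : Fin n → ℝ} (hl : StrictMono l) (u : Fin (n + 1) → ℝ) :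
    ∑ j, u j ^ 2 = (∑ j, u j - ∑ i, l i) ^ 2 + ∑ i, l i ^ 2 + 2 * ∑ i, qq l u i :=
  (rev_identity (mon_identity hl u)).2

lemma qq_inj {n : ℕ} {l : Fin n → ℝ} {u u' : Fin (n + 1) → ℝ} 
    (h : Lace l u) (h' : Lace l u') (hs : ∑ j, u j - ∑ i, l i = ∑ j, u' j - ∑ i, l i)
    (he : ∀ j, qq l u j = qq l u' j) : u = u' := by
  have hl : StrictMono l := h.sml
  have e3 : mon u = mon u' := by
    rw [mon_identity hl u, mon_identity hl u', hs, funext he]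
  funext i
  have e4 : ∏ k, (u i - u' k) = 0 := by
    rw [← eval_mon, ← e3, eval_mon]
    exact Finset.prod_eq_zero (Finset.mem_univ i) (sub_self _)
  obtain ⟨k, _, hk⟩ := Finset.prod_eq_zero_iff.1 e4
  have hk := sub_eq_zero.1 hk
  rcases lt_trichotomy i k with hh | hh | hh
  · obtain ⟨j, rfl⟩ : ∃ j : Fin n, i = j.castSucc :=
      ⟨⟨i, by have := k.isLt; simp only [Fin.lt_def] at hh; omega⟩, rfl⟩
    have a1 := (h j).1
    have a2 := h'.lt2 hh
    linarith
  · rw [hk, hh]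
  · obtain ⟨j, rfl⟩ : ∃ j : Fin n, k = j.castSucc :=
      ⟨⟨k, by have := i.isLt; simp only [Fin.lt_def] at hh; omega⟩, rfl⟩
    have a1 := (h' j).1
    have a2 := h.lt2 hh
    linarith

lemma dd_eq {n : ℕ} (x : Fin n → ℝ) (i : Fin n) :
    dd x i = ∏ k, if k = i then 1 else x i - x k := by
  rw [dd, Finset.prod_ite, Finset.prod_const_one, one_mul]
  refine Finset.prod_congr ?_ fun _ _ => rfl
  ext k; simp

open Polynomial in
lemma eval_P {n : ℕ} (l q : Fin n → ℝ) (a x : ℝ) (hx : ∀ i, x - l i ≠ 0) :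
    ((X - C a) * mon l - lag l q).eval x = (∏ i, (x - l i)) * (x - a - ∑ i, q i / (x - l i)) := by
  simp only [eval_sub, eval_mul, eval_X, eval_C, eval_mon, lag, eval_finsetSum, eval_prod]
  rw [mul_sub, Finset.mul_sum, mul_comm]
  congr 1
  refine Finset.sum_congr rfl fun i _ => ?_
  rw [← Finset.mul_prod_erase Finset.univ (fun i => x - l i) (Finset.mem_univ i),
    ← Finset.compl_singleton]
  have := hx i
  field_simp

/-- Extended point configuration. -/
noncomputable def ext2 {n : ℕ} (l : Fin n → ℝ) (lo hi : ℝ) : Fin (n + 2) → ℝ :=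
  Fin.cons lo (Fin.snoc l hi : Fin (n + 1) → ℝ)

lemma ext2_zero {n : ℕ} (l : Fin n → ℝ) (lo hi : ℝ) : ext2 l lo hi 0 = lo := rfl
lemma ext2_mid {n : ℕ} (l : Fin n → ℝ) (lo hi : ℝ) (i : Fin n) :
    ext2 l lo hi i.castSucc.succ = l i := by simp [ext2]
lemma ext2_last {n : ℕ} (l : Fin n → ℝ) (lo hi : ℝ) :
    ext2 l lo hi (Fin.last n).succ = hi := by simp [ext2]

open Polynomial in
lemma qq_surj {n : ℕ} {l : Fin n → ℝ} (hl : StrictMono l) (a : ℝ) {q : Fin n → ℝ}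
    (hq : ∀ i, 0 < q i) :
    ∃ u, Lace l u ∧ ∑ j, u j - ∑ i, l i = a ∧ ∀ i, qq l u i = q i := by
  set P := (X - C a) * mon l - lag l q with hP
  set B := |a| + ∑ i, |l i| + ∑ i, q i + 1 with hB
  have hq0 : 0 ≤ ∑ i, q i := Finset.sum_nonneg fun i _ => (hq i).le
  have hl0 : 0 ≤ ∑ i, |l i| := Finset.sum_nonneg fun i _ => abs_nonneg _
  have ha0 := abs_nonneg a
  have ha1 := le_abs_self a
  have ha2 := neg_abs_le a
  have hB1 : ∀ i, |l i| ≤ ∑ i, |l i| := fun i =>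
    Finset.single_le_sum (f := fun i => |l i|) (fun i _ => abs_nonneg _) (Finset.mem_univ i)
  have hlo : ∀ i, -B - l i ≤ -1 := fun i => by linarith [hB1 i, neg_abs_le (l i)]
  have hhi : ∀ i, 1 ≤ B - l i := fun i => by linarith [hB1 i, le_abs_self (l i)]
  have hBp : 1 ≤ B := by linarith
  set v := ext2 l (-B) B with hv
  have vm : StrictMono v := by
    rw [Fin.strictMono_iff_lt_succ]
    intro i
    refine Fin.cases ?_ (fun i => ?_) i
    · rw [Fin.castSucc_zero, hv, ext2_zero]
      induction (0 : Fin (n + 1)) using Fin.lastCases with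
      | last => rw [ext2_last]; linarith
      | cast i => rw [ext2_mid]; linarith [hlo i]
    · rw [← Fin.succ_castSucc, hv, ext2_mid]
      by_cases h : i.val + 1 = n
      · have : i.succ = Fin.last n := by ext; simpa using h
        rw [this, ext2_last]; linarith [hhi i]
      · have : i.succ = (⟨i.val + 1, by omega⟩ : Fin n).castSucc := by ext; simp
        rw [this, ext2_mid]
        exact hl (by simp [Fin.lt_def])
  have d0 : dd v 0 = (-B - B) * ∏ i, (-B - l i) := by
    rw [dd_eq, Fin.prod_univ_succ, Fin.prod_univ_castSucc]
    simp only [hv, ext2_mid, ext2_last, ext2_zero, Fin.succ_ne_zero, if_false, if_true]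
    ring
  have d1 : dd v (Fin.last n).succ = (B + B) * ∏ i, (B - l i) := by
    rw [dd_eq, Fin.prod_univ_succ, Fin.prod_univ_castSucc]
    simp only [hv, ext2_mid, ext2_last, ext2_zero, Fin.succ_inj, (Fin.succ_ne_zero _).symm,
      (Fin.castSucc_lt_last _).ne, if_false, if_true]
    ring
  have d2 : ∀ i : Fin n, dd v i.castSucc.succ = (l i + B) * (l i - B) * dd l i := by
    intro i
    rw [dd_eq, Fin.prod_univ_succ, Fin.prod_univ_castSucc]
    simp only [hv, ext2_mid, ext2_last, ext2_zero, Fin.succ_inj, (Fin.succ_ne_zero _).symm,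
      (Fin.castSucc_lt_last _).ne', if_false, Fin.castSucc_inj, ← dd_eq]
    ring
  have w0 : ∀ j, 0 < P.eval (v j) / dd v j := by
    intro j
    refine Fin.cases ?_ (fun j => ?_) j
    · rw [d0, hv, ext2_zero, hP, eval_P _ _ _ _ (fun i => by linarith [hlo i])]
      have hne : (∏ i, (-B - l i)) ≠ 0 :=
        Finset.prod_ne_zero_iff.2 fun i _ => by linarith [hlo i]
      rw [mul_comm (-B - B), mul_div_mul_left _ _ hne]
      refine div_pos_of_neg_of_neg ?_ (by linarith)
      have : -∑ i, q i ≤ ∑ i, q i / (-B - l i) := by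
        rw [← Finset.sum_neg_distrib]
        refine Finset.sum_le_sum fun i _ => ?_
        rw [le_div_iff_of_neg (by linarith [hlo i])]
        nlinarith [hq i, hlo i]
      linarith
    · induction j using Fin.lastCases with
      | last =>
        rw [d1, hv, ext2_last, hP, eval_P _ _ _ _ (fun i => by linarith [hhi i])]
        have hne : (∏ i, (B - l i)) ≠ 0 :=
          Finset.prod_ne_zero_iff.2 fun i _ => by linarith [hhi i]
        rw [mul_comm (B + B), mul_div_mul_left _ _ hne]
        refine div_pos ?_ (by linarith)
        have : ∑ i, q i / (B - l i) ≤ ∑ i, q i := by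
          refine Finset.sum_le_sum fun i _ => ?_
          rw [div_le_iff₀ (by linarith [hhi i])]
          nlinarith [hq i, hhi i]
        linarith
      | cast i =>
        rw [d2, hv, ext2_mid, hP, eval_sub, eval_mul, eval_lag, eval_mon,
          Finset.prod_eq_zero (Finset.mem_univ i) (sub_self _), mul_zero, zero_sub, ← neg_mul,
          mul_div_mul_right _ _ (dd_ne hl i)]
        refine div_pos_of_neg_of_neg (by linarith [hq i]) ?_
        exact mul_neg_of_pos_of_neg (by linarith [hlo i]) (by linarith [hhi i])
  obtain ⟨u, hu, hw⟩ := ww_surj vm w0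
  set t := ∑ k, P.eval (v k) / dd v k
  have key : P - C t * mon u = 0 := by
    refine poly_zero vm.injective (fun m hm => ?_) (fun j => ?_)
    · obtain ⟨m, rfl⟩ : ∃ k, m = k + 1 := ⟨m - 1, by omega⟩
      rw [hP, sub_mul, coeff_sub, coeff_sub, coeff_sub, coeff_X_mul, coeff_C_mul, coeff_C_mul,
        coeff_mon_gt _ (by omega), coeff_mon_gt _ (by omega), coeff_mon_gt _ (by omega),
        coeff_lag_ge _ _ (by omega)]
      ring
    · have h1 := hw j
      rw [ww, ← mul_div_assoc, div_left_inj' (dd_ne vm j)] at h1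
      rw [eval_sub, eval_mul, eval_C, eval_mon, h1, sub_self]
  have t1 : t = 1 := by
    have := congrArg (fun p => coeff p (n + 1)) key
    simp only [hP, sub_mul, coeff_sub, coeff_X_mul, coeff_C_mul, coeff_mon,
        coeff_lag_ge l q (Nat.le_succ n), coeff_mon_gt l (Nat.lt_succ_self n), coeff_zero] at this
    linarith
  rw [t1, map_one, one_mul, sub_eq_zero] at key
  have hlace : Lace l u := by
    intro i
    have h1 := (hu i.castSucc).2
    have h2 := (hu i.succ).1
    rw [hv, ext2_mid] at h1
    rw [← Fin.succ_castSucc, hv, ext2_mid] at h2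
    exact ⟨h1, h2⟩
  refine ⟨u, hlace, ?_, fun i => ?_⟩
  · rw [(rev_identity (key.symm.trans hP)).1]; ring
  · rw [qq, ← eval_mon, ← key, hP, eval_sub, eval_mul, eval_lag, eval_mon,
      Finset.prod_eq_zero (Finset.mem_univ i) (sub_self _), mul_zero, zero_sub, neg_neg,
      mul_div_cancel_right₀ _ (dd_ne hl i)]

lemma hasFDeriv_prod {m : ℕ} (b : ℝ) (e c : Fin m → ℝ) (y : Fin m → ℝ)
    (hy : ∀ k, e k + c k * y k ≠ 0) :
    HasFDerivAt (fun y : Fin m → ℝ => b * ∏ k, (e k + c k * y k))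
      (∑ k, ((b * ∏ k, (e k + c k * y k)) * (c k / (e k + c k * y k))) •
        (ContinuousLinearMap.proj k : (Fin m → ℝ) →L[ℝ] ℝ)) y := by
  have h1 : ∀ k ∈ (Finset.univ : Finset (Fin m)), HasFDerivAt (fun y : Fin m → ℝ => e k + c k * y k)
      (c k • (ContinuousLinearMap.proj k : (Fin m → ℝ) →L[ℝ] ℝ)) y := fun k _ =>
    (((ContinuousLinearMap.proj k : (Fin m → ℝ) →L[ℝ] ℝ).hasFDerivAt).const_mul (c k)).const_add (e k)
  have h2 := (HasFDerivAt.finsetProd h1).const_mul b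
  refine h2.congr_fderiv ?_
  rw [Finset.smul_sum]
  refine Finset.sum_congr rfl fun k _ => ?_
  rw [smul_smul, smul_smul]
  congr 1
  rw [← Finset.mul_prod_erase Finset.univ (fun k => e k + c k * y k) (Finset.mem_univ k)]
  have := hy k
  field_simp

/-- First map. -/
noncomputable def f1 {n : ℕ} (l : Fin n → ℝ) (u : Fin (n + 1) → ℝ) : Fin (n + 1) → ℝ :=
  Fin.cons (∑ j, u j - ∑ i, l i) (qq l u)

/-- Second map. -/
noncomputable def f2 {n : ℕ} (u : Fin (n + 1) → ℝ) (y : Fin (n + 1) → ℝ) : Fin (n + 1) → ℝ :=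
  fun j => y 0 * ww (fun i => y i.succ) u j

/-- Derivative matrix of the first map. -/
noncomputable def M1 {n : ℕ} (l : Fin n → ℝ) (u : Fin (n + 1) → ℝ) :
    Matrix (Fin (n + 1)) (Fin (n + 1)) ℝ :=
  Matrix.of fun k j => (Fin.cons 1 (fun i => -qq l u i) : Fin (n + 1) → ℝ) k * (bord l u).transpose k j

/-- Derivative matrix of the second map. -/
noncomputable def M2 {n : ℕ} (u : Fin (n + 1) → ℝ) (y : Fin (n + 1) → ℝ) :
    Matrix (Fin (n + 1)) (Fin (n + 1)) ℝ :=
  Matrix.of fun j k => f2 u y j * (Matrix.of fun j k =>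
    (Fin.cons (1 / y 0) (fun _ => 1) : Fin (n + 1) → ℝ) k * bord (fun i => y i.succ) u j k) j k

lemma hasFDeriv_f1 {n : ℕ} {l : Fin n → ℝ} {u : Fin (n + 1) → ℝ} (h : Lace l u) :
    HasFDerivAt (f1 l) (Matrix.toLin' (M1 l u)).toContinuousLinearMap u := by
  rw [hasFDerivAt_pi']
  intro k
  refine Fin.cases ?_ (fun i => ?_) k
  · have h1 : HasFDerivAt (fun u : Fin (n + 1) → ℝ => ∑ j, u j - ∑ i, l i)
      (∑ j, (ContinuousLinearMap.proj j : (Fin (n + 1) → ℝ) →L[ℝ] ℝ)) u := by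
      refine HasFDerivAt.sub_const _ ?_
      exact HasFDerivAt.fun_sum fun j _ =>
        (ContinuousLinearMap.proj j : (Fin (n + 1) → ℝ) →L[ℝ] ℝ).hasFDerivAt
    refine h1.congr_fderiv ?_
    ext v
    simp [Matrix.mulVec, dotProduct, M1, bord]
  · have h1 := hasFDeriv_prod (-1 / dd l i) (fun _ : Fin (n + 1) => l i) (fun _ => -1) u
      (fun j => by have := sub_ne_zero.2 (h.ne i j); intro h; apply this; linarith)
    have e : ∀ u, (-1 / dd l i) * ∏ k : Fin (n + 1), (l i + -1 * u k) = qq l u i := by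
      intro u
      rw [qq]
      simp only [neg_one_mul, ← sub_eq_add_neg]
      ring
    simp only [e] at h1
    refine h1.congr_fderiv ?_
    ext v
    simp [Matrix.mulVec, dotProduct, M1, bord]
    rw [← Finset.sum_neg_distrib]
    refine Finset.sum_congr rfl fun j _ => ?_
    rw [← sub_eq_add_neg]
    ring

lemma hasFDeriv_f2 {n : ℕ} {u : Fin (n + 1) → ℝ} {y : Fin (n + 1) → ℝ} (hy : 0 < y 0)
    (h : Lace (fun i => y i.succ) u) :
    HasFDerivAt (f2 u) (Matrix.toLin' (M2 u y)).toContinuousLinearMap y := by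
  rw [hasFDerivAt_pi']
  intro j
  have h1 := hasFDeriv_prod (1 / dd u j) (Fin.cons 0 (fun _ => u j)) (Fin.cons 1 (fun _ => -1)) y
      (fun k => by
        refine Fin.cases ?_ (fun i => ?_) k
        · simpa using hy.ne'
        · have := sub_ne_zero.2 (h.ne i j)
          intro h; apply this; simp at h; linarith)
  have e : ∀ y : Fin (n + 1) → ℝ, (1 / dd u j) * ∏ k : Fin (n + 1),
      ((Fin.cons 0 (fun _ => u j) : Fin (n + 1) → ℝ) k +
        (Fin.cons 1 (fun _ => -1) : Fin (n + 1) → ℝ) k * y k) = f2 u y j := by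
    intro y
    rw [f2, ww, Fin.prod_univ_succ]
    simp only [Fin.cons_zero, Fin.cons_succ, neg_one_mul, ← sub_eq_add_neg]
    ring
  simp only [e] at h1
  refine h1.congr_fderiv ?_
  ext v
  simp [Matrix.mulVec, dotProduct, M2, bord]
  refine Finset.sum_congr rfl fun k _ => ?_
  refine Fin.cases ?_ (fun i => ?_) k
  · simp
  · simp only [Fin.cons_succ]
    have := sub_ne_zero.2 (h.ne i j)
    have h3 : u j + -1 * y i.succ ≠ 0 := by intro h; apply this; linarith
    have e3 : u j + -1 * y i.succ = -(y i.succ - u j) := by ring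
    rw [e3, div_neg, neg_div, neg_neg]
    ring

lemma det_M1 {n : ℕ} {l : Fin n → ℝ} {u : Fin (n + 1) → ℝ} (h : Lace l u) :
    |(Matrix.toLin' (M1 l u)).toContinuousLinearMap.det| = vd u / vd l := by
  have e0 : (Matrix.toLin' (M1 l u)).toContinuousLinearMap.det = (M1 l u).det := by
    simp [ContinuousLinearMap.det]
  rw [e0, M1, Matrix.det_mul_column, Matrix.det_transpose, abs_mul, Finset.abs_prod,
    Fin.prod_univ_succ]
  have e1 : ∀ i, |qq l u i| = qq l u i := fun i => abs_of_pos (qq_pos h i)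
  simp only [Fin.cons_zero, Fin.cons_succ, abs_one, one_mul, abs_neg, e1]
  rw [prod_qq h]
  have := abs_det_bord l u h.ne
  have v1 := vd_pos h.sml
  field_simp
  linarith

lemma det_M2 {n : ℕ} {u : Fin (n + 1) → ℝ} {y : Fin (n + 1) → ℝ} (hy : 0 < y 0)
    (h : Lace (fun i => y i.succ) u) :
    |(Matrix.toLin' (M2 u y)).toContinuousLinearMap.det| =
      y 0 ^ n * vd (fun i => y i.succ) / vd u := by
  have e0 : (Matrix.toLin' (M2 u y)).toContinuousLinearMap.det = (M2 u y).det := by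
    simp [ContinuousLinearMap.det]
  rw [e0, M2, Matrix.det_mul_column, Matrix.det_mul_row, abs_mul, abs_mul, Finset.abs_prod,
    Finset.abs_prod, Fin.prod_univ_succ (fun i => |(Fin.cons (1 / y 0) _ : Fin (n + 1) → ℝ) i|)]
  have e1 : ∀ j, |f2 u y j| = y 0 * ww (fun i => y i.succ) u j := fun j =>
    abs_of_pos (mul_pos hy (ww_pos h j))
  simp only [Fin.cons_zero, Fin.cons_succ, abs_one, Finset.prod_const_one, mul_one, e1]
  rw [Finset.prod_mul_distrib, prod_ww h, abs_of_pos (show 0 < 1 / y 0 by positivity)]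
  have := abs_det_bord _ u h.ne
  have v1 := vd_pos h.smu
  simp only [Finset.prod_const, Finset.card_univ, Fintype.card_fin]
  field_simp
  rw [pow_succ]
  linear_combination y 0 ^ n * y 0 * this

lemma f1_image {n : ℕ} {l : Fin n → ℝ} (hl : StrictMono l) :
    f1 l '' {u | Lace l u} = {z | ∀ i : Fin n, 0 < z i.succ} := by
  ext z
  constructor
  · rintro ⟨u, hu, rfl⟩ i
    exact qq_pos hu i
  · intro hz
    obtain ⟨u, h1, h2, h3⟩ := qq_surj hl (z 0) (q := fun i => z i.succ) hz
    refine ⟨u, h1, ?_⟩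
    funext k
    refine Fin.cases h2 (fun i => h3 i) k

lemma f1_inj {n : ℕ} {l : Fin n → ℝ} : Set.InjOn (f1 l) {u | Lace l u} := by
  intro u hu u' hu' he
  refine qq_inj hu hu' (congrFun he 0) (fun i => congrFun he i.succ)

lemma f2_image {n : ℕ} {u : Fin (n + 1) → ℝ} (hu : StrictMono u) :
    f2 u '' {y | 0 < y 0 ∧ Lace (fun i => y i.succ) u} = {w | ∀ j, 0 < w j} := by
  ext w
  constructor
  · rintro ⟨y, hy, rfl⟩ i
    exact mul_pos hy.1 (ww_pos hy.2 i)
  · intro hw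
    obtain ⟨l, h1, h2⟩ := ww_surj hu hw
    refine ⟨Fin.cons (∑ k, w k) l, ⟨?_, ?_⟩, ?_⟩
    · exact Finset.sum_pos (fun k _ => hw k) Finset.univ_nonempty
    · simpa using h1
    · funext j
      simpa [f2] using h2 j

lemma f2_inj {n : ℕ} {u : Fin (n + 1) → ℝ} :
    Set.InjOn (f2 u) {y | 0 < y 0 ∧ Lace (fun i => y i.succ) u} := by
  intro y hy y' hy' he
  obtain ⟨h1, h2⟩ := ww_inj hy.1 hy.2 hy'.2 (fun j => congrFun he j)
  funext k
  exact Fin.cases h1 (fun i => congrFun h2 i) k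

lemma lint_cons {n : ℕ} {F : ℝ → ENNReal} {G : (Fin n → ℝ) → ENNReal} (hF : Measurable F)
    (hG : Measurable G) :
    ∫⁻ y : Fin (n + 1) → ℝ, F (y 0) * G (fun i => y i.succ) = (∫⁻ x, F x) * ∫⁻ x, G x := by
  have h := volume_preserving_piFinSuccAbove (fun _ : Fin (n + 1) => ℝ) 0
  have h2 := h.lintegral_comp (f := fun p : ℝ × (Fin n → ℝ) => F p.1 * G p.2) (by fun_prop)
  have h3 := lintegral_prod_mul (μ := (volume : Measure ℝ)) (ν := (volume : Measure (Fin n → ℝ)))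
    hF.aemeasurable hG.aemeasurable
  exact h2.trans h3

lemma lint_prod {n : ℕ} {F : Fin n → ℝ → ENNReal} (hF : ∀ i, Measurable (F i)) :
    ∫⁻ y : Fin n → ℝ, ∏ i, F i (y i) = ∏ i, ∫⁻ x, F i x := by
  induction n with
  | zero => simp [volume_pi]
  | succ n ih =>
    rw [Fin.prod_univ_succ, ← ih (fun i => hF i.succ), ← lint_cons (hF 0)]
    · simp only [Fin.prod_univ_succ]
    · exact Finset.measurable_fun_prod _ fun i _ => (hF i.succ).comp (measurable_pi_apply i)

/-- Gamma weight on the half line. -/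
noncomputable def gw (s r : ℝ) (x : ℝ) : ENNReal :=
  (Set.Ioi (0 : ℝ)).indicator (fun x => ENNReal.ofReal (x ^ (s - 1) * Real.exp (-(r * x)))) x

lemma gw_zero {s r x : ℝ} (h : ¬ 0 < x) : gw s r x = 0 :=
  Set.indicator_of_notMem (show x ∉ Set.Ioi (0 : ℝ) from h) _

lemma measurable_gw (s r : ℝ) : Measurable (gw s r) := by
  unfold gw
  refine Measurable.indicator ?_ measurableSet_Ioi
  fun_prop

lemma lint_gw {s r : ℝ} (hs : 0 < s) (hr : 0 < r) :
    ∫⁻ x, gw s r x = ENNReal.ofReal ((1 / r) ^ s * Real.Gamma s) := by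
  unfold gw
  rw [lintegral_indicator measurableSet_Ioi, ← Real.integral_rpow_mul_exp_neg_mul_Ioi hs hr,
    ofReal_integral_eq_lintegral_ofReal]
  · have := integrableOn_rpow_mul_exp_neg_mul_rpow (p := 1) (s := s - 1) (b := r) (by linarith)
      one_pos hr
    simpa [IntegrableOn] using this
  · refine (ae_restrict_iff' measurableSet_Ioi).2 (Filter.Eventually.of_forall fun x hx => ?_)
    have : (0 : ℝ) < x := hx
    positivity

lemma lint_gauss {r : ℝ} (hr : 0 < r) :
    ∫⁻ x : ℝ, ENNReal.ofReal (Real.exp (-r * x ^ 2)) = ENNReal.ofReal (√(Real.pi / r)) := by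
  rw [← integral_gaussian, ofReal_integral_eq_lintegral_ofReal (integrable_exp_neg_mul_sq hr)]
  exact Filter.Eventually.of_forall fun x => (Real.exp_pos _).le

lemma ennreal_solve {a b : ℝ} {X : ENNReal} (hb : 0 < b)
    (h : ENNReal.ofReal a = ENNReal.ofReal b * X) : X = ENNReal.ofReal (a / b) := by
  rw [ENNReal.ofReal_div_of_pos hb, h, mul_comm, ENNReal.mul_div_cancel_right]
  · simpa using hb
  · exact ENNReal.ofReal_ne_top

lemma continuous_vd {n : ℕ} : Continuous (vd : (Fin n → ℝ) → ℝ) := by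
  unfold vd
  fun_prop

lemma continuous_cross {n m : ℕ} :
    Continuous (fun p : (Fin n → ℝ) × (Fin m → ℝ) => cross p.1 p.2) := by
  unfold cross
  fun_prop

lemma measurable_vd {n : ℕ} : Measurable (vd : (Fin n → ℝ) → ℝ) := continuous_vd.measurable

lemma measurable_cross {n m : ℕ} :
    Measurable (fun p : (Fin n → ℝ) × (Fin m → ℝ) => cross p.1 p.2) := continuous_cross.measurable

lemma meas_lace {n : ℕ} :
    MeasurableSet {p : (Fin n → ℝ) × (Fin (n + 1) → ℝ) | Lace p.1 p.2} := by
  have : {p : (Fin n → ℝ) × (Fin (n + 1) → ℝ) | Lace p.1 p.2} =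
      ⋂ i : Fin n, ({p | p.2 i.castSucc < p.1 i} ∩ {p | p.1 i < p.2 i.succ}) := by
    ext p; simp [Lace]
  rw [this]
  refine MeasurableSet.iInter fun i => MeasurableSet.inter ?_ ?_
  · exact measurableSet_lt (by fun_prop) (by fun_prop)
  · exact measurableSet_lt (by fun_prop) (by fun_prop)

lemma meas_lace1 {n : ℕ} (u : Fin (n + 1) → ℝ) : MeasurableSet {l : Fin n → ℝ | Lace l u} :=
  (measurable_id.prodMk measurable_const : Measurable fun l : Fin n → ℝ => (l, u)) meas_lace

lemma meas_lace2 {n : ℕ} (l : Fin n → ℝ) : MeasurableSet {u : Fin (n + 1) → ℝ | Lace l u} :=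
  (measurable_const.prodMk measurable_id : Measurable fun u : Fin (n + 1) → ℝ => (l, u)) meas_lace

lemma meas_lint1 {n : ℕ} (u : Fin (n + 1) → ℝ) (γ : ℝ) : Measurable ({l | Lace l u}.indicator
    (fun l : Fin n → ℝ => ENNReal.ofReal (vd l * cross l u ^ (γ - 1)))) := by
  refine Measurable.indicator ?_ (meas_lace1 u)
  have h : Measurable (fun l : Fin n → ℝ => cross l u) := by
    unfold cross
    fun_prop
  exact ENNReal.measurable_ofReal.comp (measurable_vd.mul (h.pow_const _))

open Classical in
lemma lace1_pt {n : ℕ} {u : Fin (n + 1) → ℝ} (hu : StrictMono u) {γ : ℝ} (y : Fin (n + 1) → ℝ) :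
      {y : Fin (n + 1) → ℝ | 0 < y 0 ∧ Lace (fun i => y i.succ) u}.indicator (fun y =>
      ENNReal.ofReal |(Matrix.toLin' (M2 u y)).toContinuousLinearMap.det| *
        ∏ j, gw γ 1 (f2 u y j)) y = ENNReal.ofReal (1 / vd u ^ (2 * γ - 1)) *
        (gw ((n + 1) * γ) 1 (y 0) * {l | Lace l u}.indicator
        (fun l => ENNReal.ofReal (vd l * cross l u ^ (γ - 1))) (fun i => y i.succ)) := by
      have hvu := vd_pos hu
      by_cases hy : 0 < y 0
      swap
      · simp [hy, gw]
      by_cases hl : Lace (fun i => y i.succ) u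
      swap
      · simp [hl]
      rw [Set.indicator_of_mem (show y ∈ {y : Fin (n + 1) → ℝ | 0 < y 0 ∧ Lace (fun i => y i.succ) u}
          from ⟨hy, hl⟩), Set.indicator_of_mem
          (show (fun i => y i.succ) ∈ {l : Fin n → ℝ | Lace l u} from hl), det_M2 hy hl]
      set l : Fin n → ℝ := fun i => y i.succ with hldef
      have hw : ∀ j, 0 < ww l u j := ww_pos hl
      have hc := cross_pos hl
      have hvl := vd_pos hl.sml
      have hf : ∀ j, f2 u y j = y 0 * ww l u j := fun j => rfl
      have hg : ∀ (s r x : ℝ), 0 < x → gw s r x = ENNReal.ofReal (x ^ (s - 1) * Real.exp (-(r * x))) :=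
        fun s r x hx => Set.indicator_of_mem (show x ∈ Set.Ioi (0 : ℝ) from hx) _
      have hp : ∏ j, gw γ 1 (f2 u y j) =
          ENNReal.ofReal ((y 0 ^ (n + 1) * (cross l u / vd u ^ 2)) ^ (γ - 1) * Real.exp (-y 0)) := by
        have : ∀ j, gw γ 1 (f2 u y j) = ENNReal.ofReal ((f2 u y j) ^ (γ - 1) * Real.exp (-(f2 u y j))) := by
          intro j
          rw [hg _ _ _ (by rw [hf]; exact mul_pos hy (hw j)), one_mul]
        simp only [this]
        rw [← ENNReal.ofReal_prod_of_nonneg]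
        · rw [Finset.prod_mul_distrib, Real.finsetProd_rpow, ← Real.exp_sum]
          · simp only [hf]
            rw [Finset.sum_neg_distrib, ← Finset.mul_sum, sum_ww l hu, mul_one,
              Finset.prod_mul_distrib, prod_ww hl]
            simp
          · intro j _; rw [hf]; exact (mul_pos hy (hw j)).le
        · intro j _; rw [hf]; have := hw j; positivity
      rw [hp, hg _ _ _ hy, ← ENNReal.ofReal_mul (by positivity), ← ENNReal.ofReal_mul (by positivity),
        ← ENNReal.ofReal_mul (by positivity)]
      congr 1
      rw [Real.mul_rpow (by positivity) (by positivity), Real.div_rpow (by positivity) (by positivity),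
        ← Real.rpow_natCast, ← Real.rpow_natCast, ← Real.rpow_natCast, ← Real.rpow_mul hy.le,
        ← Real.rpow_mul hvu.le, one_mul]
      have e1 : y 0 ^ (((n : ℝ) + 1) * γ - 1) = y 0 ^ (n : ℝ) * y 0 ^ (((n + 1 : ℕ) : ℝ) * (γ - 1)) := by
        rw [← Real.rpow_add hy]; congr 1; push_cast; ring
      have e2 : vd u ^ (2 * γ - 1) = vd u * vd u ^ (((2 : ℕ) : ℝ) * (γ - 1)) := by
        nth_rw 2 [← Real.rpow_one (vd u)]
        rw [← Real.rpow_add hvu]; congr 1; push_cast; ring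
      rw [e1, e2]
      field_simp

open Classical in
lemma int_lace1 {n : ℕ} {u : Fin (n + 1) → ℝ} (hu : StrictMono u) {γ : ℝ} (hγ : 0 < γ) :
    ∫⁻ l : Fin n → ℝ, {l | Lace l u}.indicator
        (fun l => ENNReal.ofReal (vd l * cross l u ^ (γ - 1))) l =
      ENNReal.ofReal (Real.Gamma γ ^ (n + 1) / Real.Gamma ((n + 1) * γ) * vd u ^ (2 * γ - 1)) := by
  have hm : MeasurableSet {y : Fin (n + 1) → ℝ | 0 < y 0 ∧ Lace (fun i => y i.succ) u} := by
    refine MeasurableSet.inter (measurableSet_lt measurable_const (measurable_pi_apply 0)) ?_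
    have : Measurable (fun y : Fin (n + 1) → ℝ => fun i : Fin n => y i.succ) := by fun_prop
    exact this (meas_lace1 u)
  have cv := lintegral_image_eq_lintegral_abs_det_fderiv_mul volume hm
    (fun y hy => (hasFDeriv_f2 hy.1 hy.2).hasFDerivWithinAt) f2_inj (fun w => ∏ j, gw γ 1 (w j))
  rw [f2_image hu] at cv
  have hL : ∫⁻ w in {w : Fin (n + 1) → ℝ | ∀ j, 0 < w j}, ∏ j, gw γ 1 (w j) =
      ENNReal.ofReal (Real.Gamma γ ^ (n + 1)) := by
    rw [setLIntegral_eq_of_support_subset]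
    · rw [lint_prod (fun _ => measurable_gw γ 1)]
      simp [lint_gw hγ one_pos, ENNReal.ofReal_pow (Real.Gamma_pos_of_pos hγ).le]
    · intro w hw j
      by_contra hj
      exact hw (Finset.prod_eq_zero (Finset.mem_univ j) (gw_zero hj))
  rw [hL] at cv
  have hvu := vd_pos hu
  have hn : (0 : ℝ) < (n + 1) * γ := by positivity
  have hR : ∫⁻ y in {y : Fin (n + 1) → ℝ | 0 < y 0 ∧ Lace (fun i => y i.succ) u},
      ENNReal.ofReal |(Matrix.toLin' (M2 u y)).toContinuousLinearMap.det| *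
        ∏ j, gw γ 1 (f2 u y j) =
      ENNReal.ofReal (Real.Gamma ((n + 1) * γ) / vd u ^ (2 * γ - 1)) *
      ∫⁻ l : Fin n → ℝ, {l | Lace l u}.indicator
        (fun l => ENNReal.ofReal (vd l * cross l u ^ (γ - 1))) l := by
    have e := lace1_pt hu (γ := γ)
    rw [← lintegral_indicator hm]
    simp only [e]
    rw [lintegral_const_mul', lint_cons (measurable_gw _ _) (meas_lint1 u γ), lint_gw hn one_pos, ← mul_assoc,
      ← ENNReal.ofReal_mul (by positivity)]
    · congr 2
      simp
      ring
    · exact ENNReal.ofReal_ne_top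
  rw [hR] at cv
  have hG := Real.Gamma_pos_of_pos hn
  rw [ennreal_solve (by positivity) cv]
  congr 1
  field_simp

open Classical in
lemma int_lace2 {n : ℕ} {l : Fin n → ℝ} (hl : StrictMono l) {γ : ℝ} (hγ : 0 < γ) :
    ∫⁻ u : Fin (n + 1) → ℝ, {u | Lace l u}.indicator
        (fun u => ENNReal.ofReal (vd u * cross l u ^ (γ - 1) *
          Real.exp (-(γ / 2) * ∑ j, u j ^ 2))) u =
      ENNReal.ofReal (√(Real.pi / (γ / 2)) * ((1 / γ) ^ γ * Real.Gamma γ) ^ n *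
        (vd l ^ (2 * γ - 1) * Real.exp (-(γ / 2) * ∑ i, l i ^ 2))) := by
  have cv := lintegral_image_eq_lintegral_abs_det_fderiv_mul volume (meas_lace2 l)
    (fun u hu => (hasFDeriv_f1 hu).hasFDerivWithinAt) f1_inj
    (fun z => ENNReal.ofReal (Real.exp (-(γ / 2) * z 0 ^ 2)) * ∏ i : Fin n, gw γ γ (z i.succ))
  rw [f1_image hl] at cv
  have hvl := vd_pos hl
  have hL : ∫⁻ z in {z : Fin (n + 1) → ℝ | ∀ i : Fin n, 0 < z i.succ},
      ENNReal.ofReal (Real.exp (-(γ / 2) * z 0 ^ 2)) * ∏ i : Fin n, gw γ γ (z i.succ) =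
      ENNReal.ofReal (√(Real.pi / (γ / 2)) * ((1 / γ) ^ γ * Real.Gamma γ) ^ n) := by
    rw [setLIntegral_eq_of_support_subset]
    · rw [lint_cons (F := fun x => ENNReal.ofReal (Real.exp (-(γ / 2) * x ^ 2)))
        (G := fun y : Fin n → ℝ => ∏ i, gw γ γ (y i)) (by fun_prop)
        (Finset.measurable_fun_prod _ fun i _ => (measurable_gw γ γ).comp (measurable_pi_apply i)),
        lint_gauss (by positivity), lint_prod (fun _ => measurable_gw γ γ)]
      have := Real.Gamma_pos_of_pos hγ
      rw [ENNReal.ofReal_mul (by positivity), ENNReal.ofReal_pow (by positivity)]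
      simp [lint_gw hγ hγ]
    · intro w hw j
      by_contra hj
      refine hw ?_
      show _ * _ = _
      rw [Finset.prod_eq_zero (Finset.mem_univ j) (gw_zero hj), mul_zero]
  rw [hL] at cv
  rw [← lintegral_indicator (meas_lace2 l)] at cv
  have e : ∀ u : Fin (n + 1) → ℝ, {u | Lace l u}.indicator (fun u =>
      ENNReal.ofReal |(Matrix.toLin' (M1 l u)).toContinuousLinearMap.det| *
        (ENNReal.ofReal (Real.exp (-(γ / 2) * f1 l u 0 ^ 2)) *
          ∏ i : Fin n, gw γ γ (f1 l u i.succ))) u =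
      ENNReal.ofReal (1 / (vd l ^ (2 * γ - 1) * Real.exp (-(γ / 2) * ∑ i, l i ^ 2))) *
      {u | Lace l u}.indicator
        (fun u => ENNReal.ofReal (vd u * cross l u ^ (γ - 1) *
          Real.exp (-(γ / 2) * ∑ j, u j ^ 2))) u := by
    intro u
    by_cases hu : Lace l u
    swap
    · simp [hu]
    rw [Set.indicator_of_mem (show u ∈ {u | Lace l u} from hu),
      Set.indicator_of_mem (show u ∈ {u | Lace l u} from hu), det_M1 hu]
    have hw : ∀ j, 0 < qq l u j := qq_pos hu
    have hc := cross_pos hu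
    have hvu := vd_pos hu.smu
    have hp : ∏ i, gw γ γ (f1 l u (Fin.succ i)) =
        ENNReal.ofReal ((cross l u / vd l ^ 2) ^ (γ - 1) * Real.exp (-(γ * ∑ i, qq l u i))) := by
      have : ∀ i : Fin n, gw γ γ (f1 l u i.succ) =
          ENNReal.ofReal ((qq l u i) ^ (γ - 1) * Real.exp (-(γ * qq l u i))) := by
        intro i
        exact Set.indicator_of_mem (show f1 l u i.succ ∈ Set.Ioi (0 : ℝ) from hw i) _
      simp only [this]
      rw [← ENNReal.ofReal_prod_of_nonneg]
      · rw [Finset.prod_mul_distrib, Real.finsetProd_rpow, ← Real.exp_sum]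
        · rw [Finset.sum_neg_distrib, ← Finset.mul_sum, prod_qq hu]
        · intro j _; exact (hw j).le
      · intro j _; have := hw j; positivity
    rw [hp, ← ENNReal.ofReal_mul (by positivity), ← ENNReal.ofReal_mul (by positivity),
      ← ENNReal.ofReal_mul (by positivity)]
    congr 1
    have h0 : f1 l u 0 = ∑ j, u j - ∑ i, l i := rfl
    rw [h0, sum_sq hl u, Real.div_rpow (by positivity) (by positivity), ← Real.rpow_natCast (vd l) 2,
      ← Real.rpow_mul hvl.le]
    have e2 : vd l ^ (2 * γ - 1) = vd l * vd l ^ (((2 : ℕ) : ℝ) * (γ - 1)) := by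
      nth_rw 2 [← Real.rpow_one (vd l)]
      rw [← Real.rpow_add hvl]; congr 1; push_cast; ring
    have e3 : -(γ / 2) * ((∑ j, u j - ∑ i, l i) ^ 2 + ∑ i, l i ^ 2 + 2 * ∑ i, qq l u i) =
      -(γ / 2) * (∑ j, u j - ∑ i, l i) ^ 2 + -(γ / 2) * ∑ i, l i ^ 2 + -(γ * ∑ i, qq l u i) := by
      ring
    rw [e2, e3, Real.exp_add, Real.exp_add]
    field_simp
  simp only [e] at cv
  rw [lintegral_const_mul' _ _ ENNReal.ofReal_ne_top] at cv
  rw [ennreal_solve (by positivity) cv]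
  congr 1
  field_simp

/-- Integrand on the ordered chamber and in general. -/
noncomputable def gden {n : ℕ} (γ : ℝ) (l : Fin n → ℝ) : ENNReal :=
  ENNReal.ofReal (vd l ^ (2 * γ) * Real.exp (-(γ / 2) * ∑ i, l i ^ 2))

/-- Chamber integral. -/
noncomputable def Ach (n : ℕ) (γ : ℝ) : ENNReal :=
  ∫⁻ l : Fin n → ℝ, {l | StrictMono l}.indicator (gden γ) l

lemma measurable_gden {n : ℕ} (γ : ℝ) : Measurable (gden γ : (Fin n → ℝ) → ENNReal) := by
  have h : Measurable (fun l : Fin n → ℝ => Real.exp (-(γ / 2) * ∑ i, l i ^ 2)) := by fun_prop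
  exact ENNReal.measurable_ofReal.comp ((measurable_vd.pow_const _).mul h)

/-- Joint kernel. -/
noncomputable def kern {n : ℕ} (γ : ℝ) (l : Fin n → ℝ) (u : Fin (n + 1) → ℝ) : ENNReal :=
  {p : (Fin n → ℝ) × (Fin (n + 1) → ℝ) | Lace p.1 p.2}.indicator (fun p =>
    ENNReal.ofReal (vd p.1 * vd p.2 * cross p.1 p.2 ^ (γ - 1) *
      Real.exp (-(γ / 2) * ∑ j, p.2 j ^ 2))) (l, u)

lemma measurable_kern {n : ℕ} (γ : ℝ) :
    Measurable (Function.uncurry (kern γ : (Fin n → ℝ) → (Fin (n + 1) → ℝ) → ENNReal)) := by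
  have h : Measurable (fun p : (Fin n → ℝ) × (Fin (n + 1) → ℝ) =>
      Real.exp (-(γ / 2) * ∑ i, p.2 i ^ 2)) := by fun_prop
  have h1 : Measurable (fun p : (Fin n → ℝ) × (Fin (n + 1) → ℝ) => vd p.1) :=
    measurable_vd.comp measurable_fst
  have h2 : Measurable (fun p : (Fin n → ℝ) × (Fin (n + 1) → ℝ) => vd p.2) :=
    measurable_vd.comp measurable_snd
  have h3 := ENNReal.measurable_ofReal.comp
    (((h1.mul h2).mul ((measurable_cross (n := n) (m := n + 1)).pow_const (γ - 1))).mul h)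
  exact Measurable.indicator h3 meas_lace

lemma two_mul_rpow {a γ : ℝ} (ha : 0 < a) : a * a ^ (2 * γ - 1) = a ^ (2 * γ) := by
  nth_rw 1 [← Real.rpow_one a]
  rw [← Real.rpow_add ha]; congr 1; ring

lemma kern_int_u {n : ℕ} {γ : ℝ} (hγ : 0 < γ) (l : Fin n → ℝ) :
    ∫⁻ u, kern γ l u = ENNReal.ofReal (√(Real.pi / (γ / 2)) * ((1 / γ) ^ γ * Real.Gamma γ) ^ n) *
      {l | StrictMono l}.indicator (gden γ) l := by
  by_cases hl : StrictMono l
  · have hvl := vd_pos hl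
    have hG := Real.Gamma_pos_of_pos hγ
    have e : ∀ u, kern γ l u = ENNReal.ofReal (vd l) * {u | Lace l u}.indicator
        (fun u => ENNReal.ofReal (vd u * cross l u ^ (γ - 1) *
          Real.exp (-(γ / 2) * ∑ j, u j ^ 2))) u := by
      intro u
      by_cases h : Lace l u
      · simp only [kern, Set.indicator, Set.mem_ofPred_eq, h, if_true]
        rw [← ENNReal.ofReal_mul hvl.le]
        congr 1; ring
      · simp [kern, h]
    simp only [e]
    rw [lintegral_const_mul' _ _ ENNReal.ofReal_ne_top, int_lace2 hl hγ,
      Set.indicator_of_mem (show l ∈ {l | StrictMono l} from hl), gden, ← ENNReal.ofReal_mul hvl.le,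
      ← ENNReal.ofReal_mul (by positivity), ← two_mul_rpow hvl]
    congr 1; ring
  · have e : ∀ u, kern γ l u = 0 := fun u =>
      Set.indicator_of_notMem (fun h : Lace l u => hl h.sml) _
    simp [e, hl]

lemma kern_int_l {n : ℕ} {γ : ℝ} (hγ : 0 < γ) (u : Fin (n + 1) → ℝ) :
    ∫⁻ l, kern γ l u = ENNReal.ofReal (Real.Gamma γ ^ (n + 1) / Real.Gamma ((n + 1) * γ)) *
      {l | StrictMono l}.indicator (gden γ) u := by
  by_cases hu : StrictMono u
  · have hvu := vd_pos hu
    have hG := Real.Gamma_pos_of_pos hγ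
    have hG2 := Real.Gamma_pos_of_pos (show (0 : ℝ) < (n + 1) * γ by positivity)
    have e : ∀ l, kern γ l u = ENNReal.ofReal (vd u * Real.exp (-(γ / 2) * ∑ j, u j ^ 2)) *
        {l | Lace l u}.indicator (fun l => ENNReal.ofReal (vd l * cross l u ^ (γ - 1))) l := by
      intro l
      by_cases h : Lace l u
      · simp only [kern, Set.indicator, Set.mem_ofPred_eq, h, if_true]
        rw [← ENNReal.ofReal_mul (by positivity)]
        congr 1; ring
      · simp [kern, h]
    simp only [e]
    rw [lintegral_const_mul' _ _ ENNReal.ofReal_ne_top, int_lace1 hu hγ,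
      Set.indicator_of_mem (show u ∈ {l | StrictMono l} from hu), gden,
      ← ENNReal.ofReal_mul (by positivity),
      ← ENNReal.ofReal_mul (by positivity), ← two_mul_rpow hvu]
    congr 1; ring
  · have e : ∀ l, kern γ l u = 0 := fun l =>
      Set.indicator_of_notMem (fun h : Lace l u => hu h.smu) _
    simp [e, hu]

lemma Ach_succ {n : ℕ} {γ : ℝ} (hγ : 0 < γ) :
    ENNReal.ofReal (√(Real.pi / (γ / 2)) * ((1 / γ) ^ γ * Real.Gamma γ) ^ n) * Ach n γ =
    ENNReal.ofReal (Real.Gamma γ ^ (n + 1) / Real.Gamma ((n + 1) * γ)) * Ach (n + 1) γ := by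
  unfold Ach
  rw [← lintegral_const_mul' _ _ ENNReal.ofReal_ne_top,
    ← lintegral_const_mul' _ _ ENNReal.ofReal_ne_top]
  simp only [← kern_int_u hγ, ← kern_int_l hγ]
  exact lintegral_lintegral_swap (measurable_kern γ).aemeasurable

lemma Ach_zero (γ : ℝ) : Ach 0 γ = 1 := by
  have : ∀ l : Fin 0 → ℝ, StrictMono l := fun l i => i.elim0
  simp [Ach, gden, this, vd, volume_pi]

lemma Ach_eq {γ : ℝ} (hγ : 0 < γ) (n : ℕ) :
    Ach n γ = ENNReal.ofReal (∏ k ∈ Finset.range n,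
      (√(Real.pi / (γ / 2)) * ((1 / γ) ^ γ) ^ k * (Real.Gamma ((k + 1) * γ) / Real.Gamma γ))) := by
  have hG := Real.Gamma_pos_of_pos hγ
  induction n with
  | zero => simp [Ach_zero]
  | succ n ih =>
    have hG2 := Real.Gamma_pos_of_pos (show (0 : ℝ) < (n + 1) * γ by positivity)
    have h := Ach_succ (n := n) hγ
    rw [ih, ← ENNReal.ofReal_mul (by positivity)] at h
    rw [ennreal_solve (by positivity) h, Finset.prod_range_succ]
    congr 1
    field_simp
    rw [mul_pow]; ring

lemma vd_eq_abs_det {n : ℕ} (x : Fin n → ℝ) : vd x = |(Matrix.vandermonde x).det| := by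
  simp [Matrix.det_vandermonde, vd, Finset.abs_prod]

lemma vd_perm {n : ℕ} (x : Fin n → ℝ) (σ : Equiv.Perm (Fin n)) : vd (x ∘ σ) = vd x := by
  have : Matrix.vandermonde (x ∘ σ) = (Matrix.vandermonde x).submatrix σ id := rfl
  rw [vd_eq_abs_det, vd_eq_abs_det, this, Matrix.det_permute, abs_mul]
  rcases Int.units_eq_one_or (Equiv.Perm.sign σ) with h | h <;> simp [h]

lemma gden_perm {n : ℕ} (γ : ℝ) (x : Fin n → ℝ) (σ : Equiv.Perm (Fin n)) :
    gden γ (x ∘ σ) = gden γ x := by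
  simp only [gden, vd_perm, Function.comp]
  rw [Equiv.sum_comp σ (fun i => x i ^ 2)]

lemma gden_zero {n : ℕ} {γ : ℝ} (hγ : 0 < γ) {x : Fin n → ℝ} (hx : ¬ Function.Injective x) :
    gden γ x = 0 := by
  have : vd x = 0 := by
    rw [vd_eq_abs_det, abs_eq_zero]
    by_contra h
    exact hx (Matrix.det_vandermonde_ne_zero_iff.1 h)
  rw [gden, this, Real.zero_rpow (by positivity)]
  simp

lemma gden_sum {n : ℕ} {γ : ℝ} (hγ : 0 < γ) (x : Fin n → ℝ) :
    gden γ x = ∑ σ : Equiv.Perm (Fin n), {l | StrictMono l}.indicator (gden γ) (x ∘ σ) := by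
  by_cases hx : Function.Injective x
  · rw [Finset.sum_eq_single (Tuple.sort x)]
    · rw [Set.indicator_of_mem, gden_perm]
      exact (Tuple.monotone_sort x).strictMono_of_injective (hx.comp (Equiv.injective _))
    · intro σ _ hσ
      refine Set.indicator_of_notMem (fun h : StrictMono (x ∘ σ) => hσ ?_) _
      have := Tuple.unique_monotone h.monotone (Tuple.monotone_sort x)
      ext i
      exact congrArg _ (hx (congrFun this i))
    · simp
  · rw [gden_zero hγ hx]
    refine (Finset.sum_eq_zero fun σ _ => ?_).symm
    refine Set.indicator_of_notMem (fun h : StrictMono (x ∘ σ) => hx ?_) _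
    have := h.injective
    exact (Equiv.injective_comp σ x).1 this

lemma meas_sm {n : ℕ} : MeasurableSet {l : Fin n → ℝ | StrictMono l} := by
  have : {l : Fin n → ℝ | StrictMono l} = ⋂ i, ⋂ j, ⋂ (_ : i < j), {l | l i < l j} := by
    ext l; simp [StrictMono]
  rw [this]
  refine MeasurableSet.iInter fun i => MeasurableSet.iInter fun j => MeasurableSet.iInter fun _ => ?_
  exact measurableSet_lt (by fun_prop) (by fun_prop)

lemma lint_gden {n : ℕ} {γ : ℝ} (hγ : 0 < γ) :
    ∫⁻ x : Fin n → ℝ, gden γ x = (n.factorial : ENNReal) * Ach n γ := by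
  have hm : Measurable ({l : Fin n → ℝ | StrictMono l}.indicator (gden γ)) :=
    (measurable_gden γ).indicator meas_sm
  have hp : ∀ σ : Equiv.Perm (Fin n), MeasurePreserving (fun x : Fin n → ℝ => x ∘ σ) := by
    intro σ
    have := (volume_measurePreserving_piCongrLeft (fun _ : Fin n => ℝ) σ.symm)
    have e : (fun x : Fin n → ℝ => x ∘ σ) =
        MeasurableEquiv.piCongrLeft (fun _ : Fin n => ℝ) σ.symm := by
      funext x i
      have h := MeasurableEquiv.piCongrLeft_apply_apply (β := fun _ : Fin n => ℝ) σ.symm x (σ i)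
      rw [Equiv.symm_apply_apply] at h
      exact h.symm
    rw [e]
    exact this
  simp_rw [gden_sum hγ]
  rw [lintegral_finsetSum]
  · have : ∀ σ : Equiv.Perm (Fin n),
      ∫⁻ x : Fin n → ℝ, {l | StrictMono l}.indicator (gden γ) (x ∘ σ) = Ach n γ :=
      fun σ => (hp σ).lintegral_comp hm
    simp [this, Fintype.card_perm]
  · intro σ _
    exact hm.comp (hp σ).measurable

lemma final_const {γ : ℝ} (hγ : 0 < γ) (n : ℕ) :
    (n.factorial : ℝ) * ∏ k ∈ Finset.range n,
      (√(Real.pi / (γ / 2)) * ((1 / γ) ^ γ) ^ k * (Real.Gamma ((k + 1) * γ) / Real.Gamma γ)) =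
    (Real.sqrt (2 * Real.pi) * γ ^ (-(((n : ℝ) - 1) * γ + 1) / 2)) ^ n *
        ∏ j ∈ Finset.range n, Real.Gamma (1 + (1 + (j : ℝ)) * γ) / Real.Gamma (1 + γ) := by
  have hG := Real.Gamma_pos_of_pos hγ
  have h1 : √(Real.pi / (γ / 2)) = √(2 * Real.pi) * γ ^ (-(1 / 2) : ℝ) := by
    rw [show Real.pi / (γ / 2) = (2 * Real.pi) / γ by field_simp, Real.sqrt_div (by positivity),
      Real.rpow_neg hγ.le, ← Real.sqrt_eq_rpow, div_eq_mul_inv]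
  have h2 : ∀ k : ℕ, ((1 / γ) ^ γ) ^ k = γ ^ (-(γ * k)) := by
    intro k
    rw [one_div, Real.inv_rpow hγ.le, ← Real.rpow_neg hγ.le, ← Real.rpow_natCast,
      ← Real.rpow_mul hγ.le]
    congr 1; ring
  have h3 : ∀ m : ℕ, (√(2 * Real.pi) * γ ^ (-(((m : ℝ) - 1) * γ + 1) / 2)) ^ m =
      √(2 * Real.pi) ^ m * γ ^ (-(((m : ℝ) - 1) * γ + 1) / 2 * m) := by
    intro m
    rw [mul_pow, Real.rpow_mul hγ.le, Real.rpow_natCast]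
  rw [h3]
  induction n with
  | zero => simp
  | succ n ih =>
    have hx : (0 : ℝ) < (n + 1) * γ := by positivity
    have g1 : Real.Gamma (1 + (1 + (n : ℝ)) * γ) = ((n + 1) * γ) * Real.Gamma ((n + 1) * γ) := by
      rw [← Real.Gamma_add_one hx.ne']; congr 1; ring
    have g2 : Real.Gamma (1 + γ) = γ * Real.Gamma γ := by
      rw [← Real.Gamma_add_one hγ.ne']; congr 1; ring
    have h4 : γ ^ (-((((n + 1 : ℕ) : ℝ) - 1) * γ + 1) / 2 * (n + 1 : ℕ)) =
        γ ^ (-(((n : ℝ) - 1) * γ + 1) / 2 * n) * (γ ^ (-(1 / 2) : ℝ) * γ ^ (-(γ * n))) := by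
      rw [← Real.rpow_add hγ, ← Real.rpow_add hγ]
      congr 1; push_cast; ring
    rw [Finset.prod_range_succ, Finset.prod_range_succ, h4, g1, Nat.factorial_succ, h1, h2]
    rw [h1] at ih
    have : ∀ a b c d e f : ℝ, a * b = c → (d * a) * (b * e) = c * (d * e) := by
      intro a b c d e f h; rw [← h]; ring
    push_cast
    rw [this _ _ _ _ _ 0 ih, g2]
    field_simp
    ring

/-- Mehta/Selberg-type Gaussian integral: for `N ≥ 1` and real `γ > 0`,
`∫_{ℝ^N} ∏_{i<j} |λ_j - λ_i|^{2γ} e^{-(γ/2)(λ_1² + ⋯ + λ_N²)} dλ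
  = (√(2π) γ^{-((N-1)γ+1)/2})^N ∏_{j=0}^{N-1} Γ(1+(1+j)γ)/Γ(1+γ)`. -/
theorem stmt1 (N : ℕ) (hN : 1 ≤ N) (γ : ℝ) (hγ : 0 < γ) :
    ∫ l : Fin N → ℝ,
        (∏ i : Fin N, ∏ j ∈ Finset.Ioi i, |l j - l i| ^ (2 * γ)) *
          Real.exp (-(γ / 2) * ∑ j, (l j) ^ 2) =
      (Real.sqrt (2 * Real.pi) * γ ^ (-(((N : ℝ) - 1) * γ + 1) / 2)) ^ N *
        ∏ j ∈ Finset.range N, Real.Gamma (1 + (1 + (j : ℝ)) * γ) / Real.Gamma (1 + γ) := by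
  have hv : ∀ l : Fin N → ℝ, (∏ i : Fin N, ∏ j ∈ Finset.Ioi i, |l j - l i| ^ (2 * γ)) =
      vd l ^ (2 * γ) := by
    intro l
    rw [vd, ← Real.finsetProd_rpow _ _ (fun i _ => Finset.prod_nonneg fun j _ => abs_nonneg _)]
    exact Finset.prod_congr rfl fun i _ => Real.finsetProd_rpow _ _ (fun j _ => abs_nonneg _) _
  have hv0 : ∀ l : Fin N → ℝ, 0 ≤ vd l := fun l =>
    Finset.prod_nonneg fun i _ => Finset.prod_nonneg fun j _ => abs_nonneg _
  simp only [hv]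
  have hme : Measurable (fun l : Fin N → ℝ => Real.exp (-(γ / 2) * ∑ i, l i ^ 2)) := by fun_prop
  rw [integral_eq_lintegral_of_nonneg_ae]
  · have h := lint_gden (n := N) hγ
    unfold gden at h
    rw [h, Ach_eq hγ, ENNReal.toReal_mul, ENNReal.toReal_ofReal, ENNReal.toReal_natCast,
      final_const hγ]
    refine Finset.prod_nonneg fun k _ => ?_
    have hG := Real.Gamma_pos_of_pos hγ
    have hG2 := Real.Gamma_pos_of_pos (show (0 : ℝ) < (k + 1) * γ by positivity)
    positivity
  · refine Filter.Eventually.of_forall fun l => ?_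
    have := hv0 l
    show (0 : ℝ) ≤ _
    positivity
  · exact ((measurable_vd.pow_const _).mul hme).aestronglyMeasurable
end

section
/- Let q and K be positive integers and let t be a real number with 0 < t < 1/(qK). Then ∏_{j=0}^{qK−1} Γ(1/(tq) − j/q) = ( Γ(1/(tq)) / Γ(1/(tq) − K) ) · (2π)^{K(q−1)/2} · q^{K(1/2 − 1/t) + qK(K+1)/2} · ∏_{j=1}^{K} Γ(1/t − qj). -/
open Finset in
lemma prod_two_sin_aux (n : ℕ) :
    ∏ k ∈ range n, (2 * Real.sin (Real.pi * (((k : ℝ) + 1) / (n + 1)))) = n + 1 := by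
  have h := (Complex.isPrimitiveRoot_exp (n + 1) (Nat.succ_ne_zero n)).prod_one_sub_pow_eq_order
  have h2 := congrArg norm h
  rw [norm_prod] at h2
  have h3 : ‖((n : ℂ) + 1)‖ = (n : ℝ) + 1 := by
    have := Complex.norm_natCast (n + 1)
    push_cast at this
    exact this
  rw [h3] at h2
  refine Eq.trans ?_ h2
  refine prod_congr rfl fun k hk => ?_
  have hk' : (k : ℝ) + 1 ≤ n + 1 := by
    have := mem_range.1 hk
    have : (k : ℝ) < n := by exact_mod_cast this
    linarith
  have hn : (0 : ℝ) < n + 1 := by positivity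
  have e : Complex.exp (2 * Real.pi * Complex.I / ((n + 1 : ℕ) : ℂ)) ^ (k + 1)
      = Complex.exp (Complex.I * ((2 * (Real.pi * (((k : ℝ) + 1) / (n + 1))) : ℝ) : ℂ)) := by
    rw [← Complex.exp_nat_mul]
    congr 1
    push_cast
    ring
  rw [e, norm_sub_rev, Complex.norm_exp_I_mul_ofReal_sub_one, Real.norm_of_nonneg]
  · congr 2
    ring
  · have h0 : 0 ≤ Real.sin (2 * (Real.pi * (((k : ℝ) + 1) / (n + 1))) / 2) := by
      apply Real.sin_nonneg_of_nonneg_of_le_pi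
      · have := Real.pi_pos
        positivity
      · rw [mul_div_cancel_left₀ _ (two_ne_zero' ℝ)]
        have : ((k : ℝ) + 1) / (n + 1) ≤ 1 := (div_le_one hn).2 hk'
        nlinarith [Real.pi_pos]
    positivity

open Finset in
lemma prod_Gamma_const_sq (n : ℕ) :
    (∏ k ∈ range n, Real.Gamma (((k : ℝ) + 1) / (n + 1))) ^ 2 = (2 * Real.pi) ^ n / (n + 1) := by
  have hn : (0 : ℝ) < n + 1 := by positivity
  have hr : ∏ k ∈ range n, Real.Gamma (((k : ℝ) + 1) / (n + 1))
      = ∏ k ∈ range n, Real.Gamma (1 - ((k : ℝ) + 1) / (n + 1)) := by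
    rw [← prod_range_reflect]
    refine prod_congr rfl fun k hk => ?_
    have h1 := mem_range.1 hk
    have : ((n - 1 - k : ℕ) : ℝ) = n - 1 - k := by
      rw [Nat.cast_sub (by omega), Nat.cast_sub (by omega)]
      simp
    rw [this]
    congr 1
    field_simp
    ring
  rw [sq]
  nth_rewrite 2 [hr]
  rw [← prod_mul_distrib]
  have h1 : ∀ k ∈ range n, Real.Gamma (((k : ℝ) + 1) / (n + 1)) *
      Real.Gamma (1 - ((k : ℝ) + 1) / (n + 1)) =
      (2 * Real.pi) / (2 * Real.sin (Real.pi * (((k : ℝ) + 1) / (n + 1)))) := by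
    intro k _
    rw [Real.Gamma_mul_Gamma_one_sub, mul_div_mul_left _ _ (two_ne_zero' ℝ)]
  rw [prod_congr rfl h1, prod_div_distrib, prod_two_sin_aux, prod_const, card_range]

open Finset in
lemma prod_Gamma_const (n : ℕ) :
    ∏ k ∈ range (n + 1), Real.Gamma ((1 + (k : ℝ)) / (n + 1)) =
      (2 * Real.pi) ^ ((n : ℝ) / 2) * ((n : ℝ) + 1) ^ (-(1 / 2) : ℝ) := by
  have hn : (0 : ℝ) < n + 1 := by positivity
  have hpi := Real.pi_pos
  rw [prod_range_succ]
  have e : (1 + (n : ℝ)) / (n + 1) = 1 := by rw [add_comm, div_self hn.ne']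
  rw [e, Real.Gamma_one, mul_one]
  simp_rw [add_comm (1 : ℝ)]
  have hsq := prod_Gamma_const_sq n
  have hP : 0 ≤ ∏ k ∈ range n, Real.Gamma (((k : ℝ) + 1) / (n + 1)) :=
    prod_nonneg fun k _ => (Real.Gamma_pos_of_pos (by positivity)).le
  refine (pow_left_inj₀ hP (by positivity) (two_ne_zero)).1 ?_
  have a1 : ((2 * Real.pi) ^ ((n : ℝ) / 2)) ^ 2 = (2 * Real.pi) ^ n := by
    rw [← Real.rpow_natCast _ 2, ← Real.rpow_mul (by positivity), ← Real.rpow_natCast _ n]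
    congr 1
    push_cast
    ring
  have a2 : (((n : ℝ) + 1) ^ (-(1 / 2) : ℝ)) ^ 2 = ((n : ℝ) + 1)⁻¹ := by
    rw [← Real.rpow_natCast _ 2, ← Real.rpow_mul hn.le, ← Real.rpow_neg_one]
    congr 1
    push_cast
    ring
  rw [hsq, mul_pow ((2 * Real.pi) ^ ((n : ℝ) / 2)), a1, a2, div_eq_mul_inv]

open Finset in
/-- Gauss multiplication formula, for positive reals. -/
lemma gauss_mult (n : ℕ) (s : ℝ) (hs : 0 < s) :
    ∏ k ∈ range (n + 1), Real.Gamma ((s + (k : ℝ)) / (n + 1)) =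
      (2 * Real.pi) ^ ((n : ℝ) / 2) * ((n : ℝ) + 1) ^ (1 / 2 - s) * Real.Gamma s := by
  have hn : (0 : ℝ) < n + 1 := by positivity
  have hpi := Real.pi_pos
  set C := ∏ k ∈ range (n + 1), Real.Gamma ((1 + (k : ℝ)) / (n + 1)) with hC
  have hCpos : 0 < C := prod_pos fun k _ => Real.Gamma_pos_of_pos (by positivity)
  have hpos : ∀ y : ℝ, 0 < y → 0 < ∏ k ∈ range (n + 1), Real.Gamma ((y + (k : ℝ)) / (n + 1)) :=
    fun y hy => prod_pos fun k _ => Real.Gamma_pos_of_pos (by positivity)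
  have key := Real.eq_Gamma_of_log_convex
    (f := fun y => (∏ k ∈ range (n + 1), Real.Gamma ((y + (k : ℝ)) / (n + 1))) *
      ((n : ℝ) + 1) ^ (y - 1) / C) ?_ ?_ ?_ ?_ (Set.mem_Ioi.2 hs)
  · simp only at key
    rw [← key, prod_Gamma_const] at *
    have h1 : ((n : ℝ) + 1) ^ (1 / 2 - s) * ((n : ℝ) + 1) ^ (s - 1)
        = ((n : ℝ) + 1) ^ (-(1 / 2) : ℝ) := by
      rw [← Real.rpow_add hn]
      congr 1
      ring
    have h2 : C = (2 * Real.pi) ^ ((n : ℝ) / 2) *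
        (((n : ℝ) + 1) ^ (1 / 2 - s) * ((n : ℝ) + 1) ^ (s - 1)) := by rw [h1, hC]
    rw [eq_comm, ← mul_div_assoc, div_eq_iff hCpos.ne', h2]
    ring
  · have hlog : Set.EqOn (fun y : ℝ => (∑ k ∈ range (n + 1),
        Real.log (Real.Gamma ((y + (k : ℝ)) / (n + 1)))) + y * Real.log (n + 1)
          + (- Real.log (n + 1) - Real.log C))
        (Real.log ∘ fun y => (∏ k ∈ range (n + 1), Real.Gamma ((y + (k : ℝ)) / (n + 1))) *
          ((n : ℝ) + 1) ^ (y - 1) / C) (Set.Ioi 0) := by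
      intro y hy
      have hy : 0 < y := hy
      simp only [Function.comp_apply]
      have hlp : Real.log (∏ k ∈ range (n + 1), Real.Gamma ((y + (k : ℝ)) / (n + 1))) =
          ∑ k ∈ range (n + 1), Real.log (Real.Gamma ((y + (k : ℝ)) / (n + 1))) :=
        Real.log_prod (fun k _ => (Real.Gamma_pos_of_pos (by positivity)).ne')
      rw [Real.log_div (mul_pos (hpos y hy) (by positivity)).ne' hCpos.ne',
        Real.log_mul (hpos y hy).ne' (by positivity), Real.log_rpow hn, hlp]
      ring
    refine ConvexOn.congr ?_ hlog
    refine ⟨convex_Ioi 0, ?_⟩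
    intro x hx y hy a b ha hb hab
    have hx : 0 < x := hx
    have hy : 0 < y := hy
    have hterm : ∑ k ∈ range (n + 1),
        Real.log (Real.Gamma ((a * x + b * y + (k : ℝ)) / (n + 1))) ≤
        a * ∑ k ∈ range (n + 1), Real.log (Real.Gamma ((x + (k : ℝ)) / (n + 1))) +
        b * ∑ k ∈ range (n + 1), Real.log (Real.Gamma ((y + (k : ℝ)) / (n + 1))) := by
      rw [mul_sum, mul_sum, ← sum_add_distrib]
      refine sum_le_sum fun k _ => ?_
      have := Real.convexOn_log_Gamma.2 (x := (x + (k : ℝ)) / (n + 1))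
        (y := (y + (k : ℝ)) / (n + 1)) (Set.mem_Ioi.2 (by positivity))
        (Set.mem_Ioi.2 (by positivity)) ha hb hab
      simp only [Function.comp_apply, smul_eq_mul] at this
      convert this using 3
      field_simp
      linear_combination (-(k : ℝ)) * hab
    simp only [smul_eq_mul]
    have : (- Real.log (n + 1) - Real.log C) =
      (a + b) * (- Real.log (n + 1) - Real.log C) := by rw [hab, one_mul]
    linarith
  · intro y hy
    have h1 : ∏ k ∈ range (n + 1), Real.Gamma ((y + 1 + (k : ℝ)) / (n + 1)) =
        (y / (n + 1)) * ∏ k ∈ range (n + 1), Real.Gamma ((y + (k : ℝ)) / (n + 1)) := by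
      rw [prod_range_succ, prod_range_succ' (fun k : ℕ => Real.Gamma ((y + (k : ℝ)) / (n + 1)))]
      have e1 : (y + 1 + (n : ℝ)) / (n + 1) = y / (n + 1) + 1 := by
        field_simp
        ring
      rw [e1, Real.Gamma_add_one (by positivity)]
      have e2 : ∀ k : ℕ, y + 1 + (k : ℝ) = y + ((k + 1 : ℕ) : ℝ) := by
        intro k
        push_cast
        ring
      simp_rw [e2]
      simp only [Nat.cast_zero, add_zero]
      ring
    rw [h1, show y + 1 - 1 = (y - 1) + 1 by ring, Real.rpow_add hn, Real.rpow_one]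
    field_simp
  · intro y hy
    have := hpos y hy
    positivity
  · simp only [sub_self, Real.rpow_zero, mul_one]
    exact div_self hCpos.ne'

open Finset in
lemma block_aux (n K : ℕ) (x : ℝ) (hx : (K : ℝ) < x) :
    ∏ j ∈ range ((n + 1) * K), Real.Gamma (x - ((j : ℝ) + 1) / (n + 1)) =
      (2 * Real.pi) ^ ((K : ℝ) * n / 2) *
      ((n : ℝ) + 1) ^ ((K : ℝ) * (1 / 2 - (n + 1) * x) + ((n : ℝ) + 1) * K * ((K : ℝ) + 1) / 2) *
      ∏ j ∈ Icc 1 K, Real.Gamma ((n + 1) * x - ((n : ℝ) + 1) * j) := by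
  have hn : (0 : ℝ) < n + 1 := by positivity
  have hpi := Real.pi_pos
  induction K with
  | zero => simp
  | succ K ih =>
    push_cast at hx
    rw [mul_add, mul_one, prod_range_add, ih (by linarith), prod_Icc_succ_top (by omega)]
    have hb : ∏ i ∈ range (n + 1),
        Real.Gamma (x - ((((n + 1) * K + i : ℕ) : ℝ) + 1) / (n + 1)) =
        ∏ i ∈ range (n + 1), Real.Gamma (((n + 1) * (x - K - 1) + (i : ℝ)) / (n + 1)) := by
      rw [← prod_range_reflect]
      refine prod_congr rfl fun k hk => ?_
      have h1 := mem_range.1 hk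
      have : ((n + 1 - 1 - k : ℕ) : ℝ) = n - k := by
        rw [Nat.add_sub_cancel, Nat.cast_sub (by omega)]
      rw [Nat.cast_add, this]
      push_cast
      congr 1
      field_simp
      ring
    rw [hb, gauss_mult n _ (by apply mul_pos hn; linarith)]
    have e1 : (2 * Real.pi) ^ (((K + 1 : ℕ) : ℝ) * n / 2) =
        (2 * Real.pi) ^ ((K : ℝ) * n / 2) * (2 * Real.pi) ^ ((n : ℝ) / 2) := by
      rw [← Real.rpow_add (by positivity)]
      congr 1
      push_cast
      ring
    have e2 : ((n : ℝ) + 1) ^ (((K + 1 : ℕ) : ℝ) * (1 / 2 - (n + 1) * x) +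
          ((n : ℝ) + 1) * ((K + 1 : ℕ) : ℝ) * (((K + 1 : ℕ) : ℝ) + 1) / 2) =
        ((n : ℝ) + 1) ^ ((K : ℝ) * (1 / 2 - (n + 1) * x) +
          ((n : ℝ) + 1) * K * ((K : ℝ) + 1) / 2) *
        ((n : ℝ) + 1) ^ (1 / 2 - (n + 1) * (x - K - 1)) := by
      rw [← Real.rpow_add hn]
      congr 1
      push_cast
      ring
    have e3 : ((n : ℝ) + 1) * x - ((n : ℝ) + 1) * ((K + 1 : ℕ) : ℝ) =
        (n + 1) * (x - K - 1) := by
      push_cast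
      ring
    rw [e1, e2, e3]
    ring

/-- For positive integers `q, K` and `0 < t < 1/(qK)`:
`∏_{j=0}^{qK-1} Γ(1/(tq) - j/q)
  = (Γ(1/(tq)) / Γ(1/(tq) - K)) ⬝ (2π)^{K(q-1)/2}
      ⬝ q^{K(1/2 - 1/t) + qK(K+1)/2} ⬝ ∏_{j=1}^{K} Γ(1/t - qj)`. -/
theorem stmt4 (q K : ℕ) (hq : 0 < q) (hK : 0 < K) (t : ℝ)
    (ht : 0 < t) (ht' : t < 1 / (q * K)) :
    ∏ j ∈ Finset.range (q * K), Real.Gamma (1 / (t * q) - (j : ℝ) / q) =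
      Real.Gamma (1 / (t * q)) / Real.Gamma (1 / (t * q) - K) *
        (2 * Real.pi) ^ ((K : ℝ) * ((q : ℝ) - 1) / 2) *
        (q : ℝ) ^ ((K : ℝ) * (1 / 2 - 1 / t) + (q : ℝ) * K * ((K : ℝ) + 1) / 2) *
        ∏ j ∈ Finset.Icc 1 K, Real.Gamma (1 / t - (q : ℝ) * j) := by
  obtain ⟨n, rfl⟩ : ∃ n, q = n + 1 := ⟨q - 1, by omega⟩
  have hn : (0 : ℝ) < (n : ℝ) + 1 := by positivity
  have hK' : (0 : ℝ) < K := by exact_mod_cast hK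
  push_cast at ht' ⊢
  have hx : (K : ℝ) < 1 / (t * (n + 1)) := by
    rw [lt_div_iff₀ (by positivity)] at ht' ⊢
    linarith
  have hT : 1 / t = (n + 1) * (1 / (t * (n + 1))) := by
    field_simp
  rw [hT]
  set x := 1 / (t * ((n : ℝ) + 1)) with hxdef
  have hb := block_aux n K x hx
  have hG : Real.Gamma (x - K) ≠ 0 := (Real.Gamma_pos_of_pos (by linarith)).ne'
  have h1 := Finset.prod_range_succ
    (fun j : ℕ => Real.Gamma (x - (j : ℝ) / (n + 1))) ((n + 1) * K)
  have h2 := Finset.prod_range_succ'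
    (fun j : ℕ => Real.Gamma (x - (j : ℝ) / (n + 1))) ((n + 1) * K)
  rw [h1] at h2
  push_cast at h2
  rw [hb, mul_div_cancel_left₀ _ hn.ne', zero_div, sub_zero] at h2
  rw [add_sub_cancel_right]
  rw [← eq_div_iff hG] at h2
  rw [h2]
  ring
end
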